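/- arXiv:2103.12611 — 3 statements merged into one kernel-verified Lean document; each statement's English description precedes it below -/
import Mathlib

section
/- Fix N ≥ 1 and complex numbers ε₁, ε₂, a₁,…,a_N satisfying the genericity condition: a_b − a_c + iε₁ + jε₂ ≠ 0 for all b,c ∈ {1,…,N} and all integers i,j, unless b = c and i = j = 0. Let m₁,…,m_{2N} ∈ ℂ and P(x) = ∏_{f=1}^{2N}(x − m_f). For each N-tuple of Young diagrams λ̄ let T_{λ̄} be the multiset of complex numbers with Σ_{w∈T_{λ̄}} e^w = Σ_{b,c=1}^N e^{a_b−a_c}(χ*_{λ^{(c)}} + e^ε χ_{λ^{(b)}} − (1−e^{ε₁})(1−e^{ε₂})χ_{λ^{(b)}}χ*_{λ^{(c)}}) in the group algebra of (ℂ,+) (genericity guarantees every w ∈ T_{λ̄} is nonzero), and define μ̂(λ̄) = (−1)^{N|λ̄|}·[∏_{b=1}^N ∏_{□∈λ^{(b)}} ∏_{f=1}^{2N}(a_b + c(□) − m_f)] / ∏_{w∈T_{λ̄}} w, and Y(x)|_{λ̄} = ∏_{b=1}^N (x−a_b)·∏_{□∈λ^{(b)}} (x−a_b−c(□)−ε₁)(x−a_b−c(□)−ε₂)/[(x−a_b−c(□))(x−a_b−c(□)−ε)]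 ∈ ℂ(x). Then for every integer k ≥ 1 the rational function Σ_{λ̄ : |λ̄| = k} μ̂(λ̄)·Y(x+ε)|_{λ̄} + Σ_{λ̄ : |λ̄| = k−1} μ̂(λ̄)·P(x)/Y(x)|_{λ̄} is a polynomial in x (it has no poles); i.e., the average of the fundamental qq-character 𝒳(x) = Y(x+ε) + 𝔮·P(x)/Y(x) against the instanton pseudo-measure is, coefficientwise in 𝔮, a regular function of x. -/
open scoped BigOperators

noncomputable section

/-- The content of a (0-based) box. -/
def content (ε₁ ε₂ : ℂ) (c : ℕ × ℕ) : ℂ := (c.1 : ℂ) * ε₁ + (c.2 : ℂ) * ε₂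

/-- The basis element `e^w` of the group algebra `ℤ[ℂ]`. -/
def eExp (w : ℂ) : AddMonoidAlgebra ℤ ℂ := AddMonoidAlgebra.single w 1

/-- `χ_λ = Σ_{□∈λ} e^{c(□)}`. -/
def chi (ε₁ ε₂ : ℂ) (μ : YoungDiagram) : AddMonoidAlgebra ℤ ℂ :=
  ∑ c ∈ μ.cells, eExp (content ε₁ ε₂ c)

/-- `χ*_λ = Σ_{□∈λ} e^{−c(□)}`. -/
def chiStar (ε₁ ε₂ : ℂ) (μ : YoungDiagram) : AddMonoidAlgebra ℤ ℂ :=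
  ∑ c ∈ μ.cells, eExp (-(content ε₁ ε₂ c))

/-- The tangent character of an `N`-tuple of Young diagrams. -/
def tangentChar (N : ℕ) (ε₁ ε₂ : ℂ) (a : Fin N → ℂ)
    (lam : Fin N → YoungDiagram) : AddMonoidAlgebra ℤ ℂ :=
  ∑ b : Fin N, ∑ c : Fin N,
    eExp (a b - a c) *
      (chiStar ε₁ ε₂ (lam c) + eExp (ε₁ + ε₂) * chi ε₁ ε₂ (lam b) -
        (1 - eExp ε₁) * (1 - eExp ε₂) * chi ε₁ ε₂ (lam b) * chiStar ε₁ ε₂ (lam c))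

/-- The total number of boxes `|λ̄|` of an `N`-tuple of Young diagrams. -/
def totalCard (N : ℕ) (lam : Fin N → YoungDiagram) : ℕ := ∑ b : Fin N, (lam b).card

/-- The Y-observable `Y(x + s)|_λ̄`, as an element of `ℂ(x)`: the variable `x` is
shifted by `s` so that e.g. `Y(x + ε)` is obtained by taking `s = ε`. -/
def Yobs (N : ℕ) (ε₁ ε₂ : ℂ) (a : Fin N → ℂ) (s : ℂ)
    (lam : Fin N → YoungDiagram) : RatFunc ℂ :=
  ∏ b : Fin N,
    ((RatFunc.X + RatFunc.C s - RatFunc.C (a b)) *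
      ∏ c ∈ (lam b).cells,
        ((RatFunc.X + RatFunc.C s - RatFunc.C (a b + content ε₁ ε₂ c + ε₁)) *
            (RatFunc.X + RatFunc.C s - RatFunc.C (a b + content ε₁ ε₂ c + ε₂)) /
          ((RatFunc.X + RatFunc.C s - RatFunc.C (a b + content ε₁ ε₂ c)) *
            (RatFunc.X + RatFunc.C s - RatFunc.C (a b + content ε₁ ε₂ c + (ε₁ + ε₂))))))

/-- The matter polynomial `P(x + s) = ∏_f (x + s − m_f)`. -/
def Pmat (N : ℕ) (m : Fin (2 * N) → ℂ) (s : ℂ) : RatFunc ℂ :=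
  ∏ f : Fin (2 * N), (RatFunc.X + RatFunc.C s - RatFunc.C (m f))

/-- The instanton pseudo-measure weight
`μ̂(λ̄) = (−1)^{N|λ̄|}·[∏_b ∏_{□∈λ^{(b)}} ∏_f (a_b + c(□) − m_f)] / ∏_{w∈T_λ̄} w`. -/
def muHat (N : ℕ) (ε₁ ε₂ : ℂ) (a : Fin N → ℂ) (m : Fin (2 * N) → ℂ)
    (T : (Fin N → YoungDiagram) → Multiset ℂ) (lam : Fin N → YoungDiagram) : ℂ :=
  (-1 : ℂ) ^ (N * totalCard N lam) *
      (∏ b : Fin N, ∏ c ∈ (lam b).cells, ∏ f : Fin (2 * N),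
        (a b + content ε₁ ε₂ c - m f)) /
    (T lam).prod

/-! ### Regular germs and leading coefficients of rational functions -/

/-- `F` is regular at `z` with value `v`. -/
def RegV (z : ℂ) (F : RatFunc ℂ) (v : ℂ) : Prop :=
  ∃ p q : Polynomial ℂ, q.eval z ≠ 0 ∧
    F = algebraMap (Polynomial ℂ) (RatFunc ℂ) p / algebraMap (Polynomial ℂ) (RatFunc ℂ) q ∧
    v = p.eval z / q.eval z

/-- `F` is regular at `z`. -/
def Reg (z : ℂ) (F : RatFunc ℂ) : Prop := ∃ v, RegV z F v

lemma amap_ne_zero_of_eval {z : ℂ} {q : Polynomial ℂ} (h : q.eval z ≠ 0) :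
    algebraMap (Polynomial ℂ) (RatFunc ℂ) q ≠ 0 := by
  have : q ≠ 0 := by
    rintro rfl
    simp at h
  simpa using this

lemma RegV.poly (z : ℂ) (p : Polynomial ℂ) :
    RegV z (algebraMap (Polynomial ℂ) (RatFunc ℂ) p) (p.eval z) :=
  ⟨p, 1, by simp, by simp, by simp⟩

lemma RegV.add {z : ℂ} {F G : RatFunc ℂ} {v w : ℂ} (hF : RegV z F v) (hG : RegV z G w) :
    RegV z (F + G) (v + w) := by
  obtain ⟨p, q, hq, rfl, rfl⟩ := hF
  obtain ⟨p', q', hq', rfl, rfl⟩ := hG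
  have h1 := amap_ne_zero_of_eval hq
  have h2 := amap_ne_zero_of_eval hq'
  refine ⟨p * q' + q * p', q * q', by simp [hq, hq'], ?_, ?_⟩
  · simp only [map_add, map_mul]
    rw [div_add_div _ _ h1 h2]
  · simp only [Polynomial.eval_add, Polynomial.eval_mul]
    rw [div_add_div _ _ hq hq']

lemma RegV.mul {z : ℂ} {F G : RatFunc ℂ} {v w : ℂ} (hF : RegV z F v) (hG : RegV z G w) :
    RegV z (F * G) (v * w) := by
  obtain ⟨p, q, hq, rfl, rfl⟩ := hF
  obtain ⟨p', q', hq', rfl, rfl⟩ := hG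
  refine ⟨p * p', q * q', by simp [hq, hq'], ?_, ?_⟩
  · simp only [map_mul]
    rw [div_mul_div_comm]
  · simp only [Polynomial.eval_mul]
    rw [div_mul_div_comm]

lemma RegV.inv {z : ℂ} {F : RatFunc ℂ} {v : ℂ} (hF : RegV z F v) (hv : v ≠ 0) :
    RegV z F⁻¹ v⁻¹ := by
  obtain ⟨p, q, hq, rfl, rfl⟩ := hF
  refine ⟨q, p, ?_, ?_, ?_⟩
  · intro h
    simp [h] at hv
  · rw [inv_div]
  · rw [inv_div]

lemma RegV.const (z c : ℂ) : RegV z (RatFunc.C c) c := by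
  simpa using RegV.poly z (Polynomial.C c)

lemma RegV.lin (z s w : ℂ) : RegV z (RatFunc.X + RatFunc.C s - RatFunc.C w) (z + s - w) := by
  have := RegV.poly z (Polynomial.X + Polynomial.C s - Polynomial.C w)
  simpa only [map_sub, map_add, RatFunc.algebraMap_X, RatFunc.algebraMap_C, Polynomial.eval_sub,
    Polynomial.eval_add, Polynomial.eval_X, Polynomial.eval_C] using this

lemma RegV.prod {ι : Type*} (t : Finset ι) {z : ℂ} {F : ι → RatFunc ℂ} {v : ι → ℂ}
    (h : ∀ i ∈ t, RegV z (F i) (v i)) : RegV z (∏ i ∈ t, F i) (∏ i ∈ t, v i) := by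
  classical
  induction t using Finset.induction_on with
  | empty => simpa using RegV.const z 1
  | insert i t hi ih =>
    rw [Finset.prod_insert hi, Finset.prod_insert hi]
    exact (h i (by simp)).mul (ih fun j hj => h j (by simp [hj]))

lemma Reg.add {z : ℂ} {F G : RatFunc ℂ} (hF : Reg z F) (hG : Reg z G) : Reg z (F + G) := by
  obtain ⟨v, hv⟩ := hF
  obtain ⟨w, hw⟩ := hG
  exact ⟨_, hv.add hw⟩

lemma Reg.mul {z : ℂ} {F G : RatFunc ℂ} (hF : Reg z F) (hG : Reg z G) : Reg z (F * G) := by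
  obtain ⟨v, hv⟩ := hF
  obtain ⟨w, hw⟩ := hG
  exact ⟨_, hv.mul hw⟩

lemma Reg.sum {ι : Type*} (t : Finset ι) {z : ℂ} {F : ι → RatFunc ℂ}
    (h : ∀ i ∈ t, Reg z (F i)) : Reg z (∑ i ∈ t, F i) := by
  classical
  induction t using Finset.induction_on with
  | empty => exact ⟨0, by simpa using RegV.const z 0⟩
  | insert i t hi ih =>
    rw [Finset.sum_insert hi]
    exact (h i (by simp)).add (ih fun j hj => h j (by simp [hj]))

/-- A rational function regular everywhere is a polynomial. -/
lemma poly_of_reg (F : RatFunc ℂ) (h : ∀ z, Reg z F) :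
    ∃ p : Polynomial ℂ, F = algebraMap (Polynomial ℂ) (RatFunc ℂ) p := by
  have hd : F.denom.degree = 0 := by
    by_contra hne
    obtain ⟨z, hz⟩ := IsAlgClosed.exists_root F.denom hne
    obtain ⟨v, p, q, hq, rfl, -⟩ := h z
    have := RatFunc.denom_div_dvd p q
    exact hq (Polynomial.eval_eq_zero_of_dvd_of_eval_eq_zero this hz)
  have h1 : F.denom = 1 := by
    have := F.monic_denom
    exact (Polynomial.Monic.degree_le_zero_iff_eq_one this).1 hd.le
  refine ⟨F.num, ?_⟩
  conv_lhs => rw [← RatFunc.num_div_denom F, h1]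
  simp

/-- The local parameter. -/
def tt (z : ℂ) : RatFunc ℂ := RatFunc.X - RatFunc.C z

lemma tt_eq (z : ℂ) : tt z = algebraMap (Polynomial ℂ) (RatFunc ℂ)
    (Polynomial.X - Polynomial.C z) := by simp [tt]

lemma tt_ne (z : ℂ) : tt z ≠ 0 := by
  rw [tt_eq]
  exact RatFunc.algebraMap_ne_zero (Polynomial.X_sub_C_ne_zero z)

lemma reg_tt (z : ℂ) : Reg z (tt z) := ⟨_, by rw [tt_eq]; exact RegV.poly _ _⟩

/-- `F` has at most a simple pole at `z`, with residue `r`. -/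
def SP (z : ℂ) (F : RatFunc ℂ) (r : ℂ) : Prop := RegV z (tt z * F) r

lemma SP.add {z : ℂ} {F G : RatFunc ℂ} {r s : ℂ} (hF : SP z F r) (hG : SP z G s) :
    SP z (F + G) (r + s) := by
  have := RegV.add hF hG
  rw [← mul_add] at this
  exact this

lemma SP.mul_reg {z : ℂ} {F G : RatFunc ℂ} {r s : ℂ} (hF : SP z F r) (hG : RegV z G s) :
    SP z (G * F) (s * r) := by
  have := RegV.mul hG hF
  unfold SP
  rwa [mul_left_comm]

lemma SP.reg {z : ℂ} {F : RatFunc ℂ} (hF : SP z F 0) : Reg z F := by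
  obtain ⟨p, q, hq, h, h0⟩ := hF
  have hp : p.eval z = 0 := by
    rcases div_eq_zero_iff.1 h0.symm with h | h
    · exact h
    · exact absurd h hq
  obtain ⟨p', rfl⟩ := Polynomial.dvd_iff_isRoot.2 hp
  refine ⟨_, p', q, hq, ?_, rfl⟩
  rw [map_mul, ← tt_eq, mul_div_assoc] at h
  exact mul_left_cancel₀ (tt_ne z) h

/-- `F` has order `n` and leading coefficient `c` at `z`. -/
def Lead (z : ℂ) (F : RatFunc ℂ) (n : ℤ) (c : ℂ) : Prop :=
  c ≠ 0 ∧ ∃ G, RegV z G c ∧ F = tt z ^ n * G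

lemma Lead.mul {z : ℂ} {F G : RatFunc ℂ} {n k : ℤ} {c d : ℂ} (hF : Lead z F n c)
    (hG : Lead z G k d) : Lead z (F * G) (n + k) (c * d) := by
  obtain ⟨hc, A, hA, rfl⟩ := hF
  obtain ⟨hd, B, hB, rfl⟩ := hG
  refine ⟨mul_ne_zero hc hd, A * B, hA.mul hB, ?_⟩
  rw [zpow_add₀ (tt_ne z)]
  ring

lemma Lead.inv {z : ℂ} {F : RatFunc ℂ} {n : ℤ} {c : ℂ} (hF : Lead z F n c) :
    Lead z F⁻¹ (-n) c⁻¹ := by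
  obtain ⟨hc, A, hA, rfl⟩ := hF
  refine ⟨inv_ne_zero hc, A⁻¹, hA.inv hc, ?_⟩
  rw [mul_inv, zpow_neg]

lemma Lead.div {z : ℂ} {F G : RatFunc ℂ} {n k : ℤ} {c d : ℂ} (hF : Lead z F n c)
    (hG : Lead z G k d) : Lead z (F / G) (n - k) (c / d) := by
  rw [div_eq_mul_inv, div_eq_mul_inv, sub_eq_add_neg]
  exact hF.mul hG.inv

lemma Lead.prod {ι : Type*} (t : Finset ι) {z : ℂ} {F : ι → RatFunc ℂ} {n : ι → ℤ} {v : ι → ℂ}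
    (h : ∀ i ∈ t, Lead z (F i) (n i) (v i)) :
    Lead z (∏ i ∈ t, F i) (∑ i ∈ t, n i) (∏ i ∈ t, v i) := by
  classical
  induction t using Finset.induction_on with
  | empty => exact ⟨by simp, 1, by simpa using RegV.const z 1, by simp⟩
  | insert i t hi ih =>
    rw [Finset.prod_insert hi, Finset.prod_insert hi, Finset.sum_insert hi]
    exact (h i (by simp)).mul (ih fun j hj => h j (by simp [hj]))

/-- `w` if nonzero and `1` otherwise. -/
def nz (w : ℂ) : ℂ := if w = 0 then 1 else w

lemma nz_ne (w : ℂ) : nz w ≠ 0 := by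
  unfold nz
  split_ifs <;> simp_all

/-- Kronecker delta. -/
def kd (u w : ℂ) : ℤ := if u = w then 1 else 0

lemma Lead.lin (z s w : ℂ) :
    Lead z (RatFunc.X + RatFunc.C s - RatFunc.C w) (kd (z + s) w) (nz (z + s - w)) := by
  refine ⟨nz_ne _, ?_⟩
  by_cases h : z + s = w
  · refine ⟨1, by simpa [nz, sub_eq_zero.2 h] using RegV.const z 1, ?_⟩
    subst h
    simp [kd, tt]
  · refine ⟨_, by simpa [nz, sub_eq_zero, h] using RegV.lin z s w, ?_⟩
    simp [kd, h]

lemma Lead.reg {z : ℂ} {F : RatFunc ℂ} {n : ℤ} {c : ℂ} (hF : Lead z F n c) (hn : 0 ≤ n) :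
    Reg z F := by
  obtain ⟨hc, A, hA, rfl⟩ := hF
  obtain ⟨k, rfl⟩ := Int.eq_ofNat_of_zero_le hn
  refine Reg.mul ?_ ⟨_, hA⟩
  have := RegV.poly z ((Polynomial.X - Polynomial.C z) ^ k)
  rw [map_pow, ← tt_eq] at this
  rw [zpow_natCast]
  exact ⟨_, this⟩

lemma Lead.sp {z : ℂ} {F : RatFunc ℂ} {c : ℂ} (hF : Lead z F (-1) c) : SP z F c := by
  obtain ⟨hc, A, hA, rfl⟩ := hF
  unfold SP
  rw [zpow_neg_one, mul_inv_cancel_left₀ (tt_ne z)]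
  exact hA

/-! ### The universal `Y`-type sum and product -/

section
variable {N : ℕ}

/-- The set of all boxes. -/
def boxes (lam : Fin N → YoungDiagram) : Finset (Σ _ : Fin N, ℕ × ℕ) :=
  Finset.univ.sigma fun b => (lam b).cells

/-- Position of a box. -/
def pos (ε₁ ε₂ : ℂ) (a : Fin N → ℂ) (x : Σ _ : Fin N, ℕ × ℕ) : ℂ := a x.1 + content ε₁ ε₂ x.2

/-- `Σ_{s ∈ S} g(s)` where `S = W - (1-q₁)(1-q₂)K`. -/
def Sg {A : Type*} [AddCommGroup A] (ε₁ ε₂ : ℂ) (a : Fin N → ℂ) (lam : Fin N → YoungDiagram)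
    (g : ℂ → A) : A :=
  ∑ b, g (a b) + ∑ x ∈ boxes lam, (g (pos ε₁ ε₂ a x + ε₁) + g (pos ε₁ ε₂ a x + ε₂)
    - (g (pos ε₁ ε₂ a x) + g (pos ε₁ ε₂ a x + (ε₁ + ε₂))))

/-- `∏_{s ∈ S} g(s)` where `S = W - (1-q₁)(1-q₂)K`. -/
def Sm {A : Type*} [Field A] (ε₁ ε₂ : ℂ) (a : Fin N → ℂ) (lam : Fin N → YoungDiagram)
    (g : ℂ → A) : A :=
  (∏ b, g (a b)) * ∏ x ∈ boxes lam, (g (pos ε₁ ε₂ a x + ε₁) * g (pos ε₁ ε₂ a x + ε₂)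
    / (g (pos ε₁ ε₂ a x) * g (pos ε₁ ε₂ a x + (ε₁ + ε₂))))

lemma Yobs_eq (ε₁ ε₂ : ℂ) (a : Fin N → ℂ) (s : ℂ) (lam : Fin N → YoungDiagram) :
    Yobs N ε₁ ε₂ a s lam =
      Sm ε₁ ε₂ a lam (fun w => RatFunc.X + RatFunc.C s - RatFunc.C w) := by
  unfold Yobs Sm boxes
  rw [Finset.prod_mul_distrib, Finset.prod_sigma]
  rfl

lemma Sm_ne_zero {A : Type*} [Field A] (ε₁ ε₂ : ℂ) (a : Fin N → ℂ) (lam : Fin N → YoungDiagram)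
    (g : ℂ → A) (hg : ∀ w, g w ≠ 0) : Sm ε₁ ε₂ a lam g ≠ 0 := by
  unfold Sm
  refine mul_ne_zero (Finset.prod_ne_zero_iff.2 fun b _ => hg _)
    (Finset.prod_ne_zero_iff.2 fun b _ => ?_)
  exact div_ne_zero (mul_ne_zero (hg _) (hg _)) (mul_ne_zero (hg _) (hg _))

lemma Lead_Sm {z : ℂ} (ε₁ ε₂ : ℂ) (a : Fin N → ℂ) (lam : Fin N → YoungDiagram)
    (G : ℂ → RatFunc ℂ) (n : ℂ → ℤ) (c : ℂ → ℂ) (h : ∀ w, Lead z (G w) (n w) (c w)) :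
    Lead z (Sm ε₁ ε₂ a lam G) (Sg ε₁ ε₂ a lam n) (Sm ε₁ ε₂ a lam c) := by
  unfold Sm Sg
  refine (Lead.prod _ fun b _ => h _).mul (Lead.prod _ fun b _ => ?_)
  exact ((h _).mul (h _)).div ((h _).mul (h _))

lemma Lead_Yobs (z : ℂ) (ε₁ ε₂ : ℂ) (a : Fin N → ℂ) (s : ℂ) (lam : Fin N → YoungDiagram) :
    Lead z (Yobs N ε₁ ε₂ a s lam) (Sg ε₁ ε₂ a lam (kd (z + s)))
      (Sm ε₁ ε₂ a lam fun w => nz (z + s - w)) := by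
  rw [Yobs_eq]
  exact Lead_Sm _ _ _ _ _ _ _ fun w => Lead.lin z s w

/-- `lam'` is obtained from `lam` by adding the box `x`. -/
def Adds (lam lam' : Fin N → YoungDiagram) (x : Σ _ : Fin N, ℕ × ℕ) : Prop :=
  x ∉ boxes lam ∧ boxes lam' = insert x (boxes lam)

lemma Sg_adds {A : Type*} [AddCommGroup A] (ε₁ ε₂ : ℂ) (a : Fin N → ℂ)
    {lam lam' : Fin N → YoungDiagram} {x : Σ _ : Fin N, ℕ × ℕ} (h : Adds lam lam' x) (g : ℂ → A) :
    Sg ε₁ ε₂ a lam' g = Sg ε₁ ε₂ a lam g +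
      (g (pos ε₁ ε₂ a x + ε₁) + g (pos ε₁ ε₂ a x + ε₂)
        - (g (pos ε₁ ε₂ a x) + g (pos ε₁ ε₂ a x + (ε₁ + ε₂)))) := by
  unfold Sg
  rw [h.2, Finset.sum_insert h.1]
  abel

lemma Sm_adds {A : Type*} [Field A] (ε₁ ε₂ : ℂ) (a : Fin N → ℂ)
    {lam lam' : Fin N → YoungDiagram} {x : Σ _ : Fin N, ℕ × ℕ} (h : Adds lam lam' x) (g : ℂ → A) :
    Sm ε₁ ε₂ a lam' g = Sm ε₁ ε₂ a lam g *
      (g (pos ε₁ ε₂ a x + ε₁) * g (pos ε₁ ε₂ a x + ε₂)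
        / (g (pos ε₁ ε₂ a x) * g (pos ε₁ ε₂ a x + (ε₁ + ε₂)))) := by
  unfold Sm
  rw [h.2, Finset.prod_insert h.1]
  ring

lemma map_Sg {A B : Type*} [AddCommGroup A] [AddCommGroup B] (φ : A →+ B) (ε₁ ε₂ : ℂ)
    (a : Fin N → ℂ) (lam : Fin N → YoungDiagram) (g : ℂ → A) :
    φ (Sg ε₁ ε₂ a lam g) = Sg ε₁ ε₂ a lam (fun w => φ (g w)) := by
  simp [Sg, map_sum]

/-! ### The tangent character -/

lemma eExp_mul (u v : ℂ) : eExp u * eExp v = eExp (u + v) := by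
  simp [eExp, AddMonoidAlgebra.single_mul_single]

lemma eExp_zero : eExp 0 = 1 := rfl

/-- `K`. -/
def KK (ε₁ ε₂ : ℂ) (a : Fin N → ℂ) (lam : Fin N → YoungDiagram) : AddMonoidAlgebra ℤ ℂ :=
  ∑ x ∈ boxes lam, eExp (pos ε₁ ε₂ a x)

/-- `K*`. -/
def KS (ε₁ ε₂ : ℂ) (a : Fin N → ℂ) (lam : Fin N → YoungDiagram) : AddMonoidAlgebra ℤ ℂ :=
  ∑ x ∈ boxes lam, eExp (-pos ε₁ ε₂ a x)

lemma tangent_eq (ε₁ ε₂ : ℂ) (a : Fin N → ℂ) (lam : Fin N → YoungDiagram) :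
    tangentChar N ε₁ ε₂ a lam =
      (∑ b, eExp (a b)) * KS ε₁ ε₂ a lam + eExp (ε₁ + ε₂) * (∑ b, eExp (-a b)) * KK ε₁ ε₂ a lam -
        (1 - eExp ε₁) * (1 - eExp ε₂) * KK ε₁ ε₂ a lam * KS ε₁ ε₂ a lam := by
  have hK : KK ε₁ ε₂ a lam = ∑ b, eExp (a b) * chi ε₁ ε₂ (lam b) := by
    unfold KK boxes chi pos
    rw [Finset.sum_sigma]
    simp only [Finset.mul_sum, eExp_mul]
  have hS : KS ε₁ ε₂ a lam = ∑ b, eExp (-a b) * chiStar ε₁ ε₂ (lam b) := by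
    unfold KS boxes chiStar pos
    rw [Finset.sum_sigma]
    simp only [Finset.mul_sum, eExp_mul, neg_add]
  have e1 : (∑ b, eExp (a b)) * KS ε₁ ε₂ a lam = ∑ b : Fin N, ∑ c : Fin N,
      eExp (a b - a c) * chiStar ε₁ ε₂ (lam c) := by
    rw [hS, Finset.sum_mul_sum]
    refine Finset.sum_congr rfl fun b _ => Finset.sum_congr rfl fun c _ => ?_
    rw [sub_eq_add_neg, ← eExp_mul, mul_assoc]
  have e2 : (∑ b, eExp (-a b)) * KK ε₁ ε₂ a lam = ∑ b : Fin N, ∑ c : Fin N,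
      eExp (a b - a c) * chi ε₁ ε₂ (lam b) := by
    rw [hK, Finset.sum_mul_sum, Finset.sum_comm]
    refine Finset.sum_congr rfl fun b _ => Finset.sum_congr rfl fun c _ => ?_
    rw [sub_eq_add_neg, ← eExp_mul]
    ring
  have e3 : KK ε₁ ε₂ a lam * KS ε₁ ε₂ a lam = ∑ b : Fin N, ∑ c : Fin N,
      eExp (a b - a c) * (chi ε₁ ε₂ (lam b) * chiStar ε₁ ε₂ (lam c)) := by
    rw [hK, hS, Finset.sum_mul_sum]
    refine Finset.sum_congr rfl fun b _ => Finset.sum_congr rfl fun c _ => ?_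
    rw [sub_eq_add_neg, ← eExp_mul]
    ring
  rw [mul_assoc (eExp _), mul_assoc (_ * _), e1, e2, e3]
  unfold tangentChar
  simp only [Finset.mul_sum, ← Finset.sum_add_distrib, ← Finset.sum_sub_distrib]
  refine Finset.sum_congr rfl fun b _ => Finset.sum_congr rfl fun c _ => ?_
  ring

lemma tangent_adds (ε₁ ε₂ : ℂ) (a : Fin N → ℂ)
    {lam lam' : Fin N → YoungDiagram} {x : Σ _ : Fin N, ℕ × ℕ} (h : Adds lam lam' x) :
    tangentChar N ε₁ ε₂ a lam' = tangentChar N ε₁ ε₂ a lam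
      + Sg ε₁ ε₂ a lam (fun w => eExp (w - pos ε₁ ε₂ a x))
      + Sg ε₁ ε₂ a lam (fun w => eExp (pos ε₁ ε₂ a x + (ε₁ + ε₂) - w))
      + (eExp ε₁ + eExp ε₂ - (eExp 0 + eExp (ε₁ + ε₂))) := by
  set ξ := pos ε₁ ε₂ a x with hξ
  have hK : KK ε₁ ε₂ a lam' = eExp ξ + KK ε₁ ε₂ a lam := by
    unfold KK
    rw [h.2, Finset.sum_insert h.1]
  have hS : KS ε₁ ε₂ a lam' = eExp (-ξ) + KS ε₁ ε₂ a lam := by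
    unfold KS
    rw [h.2, Finset.sum_insert h.1]
  have g1 : Sg ε₁ ε₂ a lam (fun w => eExp (w - ξ)) =
      (∑ b, eExp (a b)) * eExp (-ξ) -
        (1 - eExp ε₁) * (1 - eExp ε₂) * KK ε₁ ε₂ a lam * eExp (-ξ) := by
    have : (1 - eExp ε₁) * (1 - eExp ε₂) * KK ε₁ ε₂ a lam * eExp (-ξ) =
        ∑ y ∈ boxes lam, ((1 - eExp ε₁) * (1 - eExp ε₂) * eExp (pos ε₁ ε₂ a y) * eExp (-ξ)) := by
      simp only [KK, Finset.mul_sum, Finset.sum_mul]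
    rw [this, Sg, Finset.sum_mul, sub_eq_add_neg, ← Finset.sum_neg_distrib]
    congr 1
    · simp only [eExp_mul, sub_eq_add_neg]
    · refine Finset.sum_congr rfl fun y _ => ?_
      simp only [sub_eq_add_neg, ← eExp_mul]
      ring
  have g2 : Sg ε₁ ε₂ a lam (fun w => eExp (ξ + (ε₁ + ε₂) - w)) =
      eExp (ε₁ + ε₂) * (∑ b, eExp (-a b)) * eExp ξ -
        (1 - eExp ε₁) * (1 - eExp ε₂) * KS ε₁ ε₂ a lam * eExp ξ := by
    have : (1 - eExp ε₁) * (1 - eExp ε₂) * KS ε₁ ε₂ a lam * eExp ξ =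
        ∑ y ∈ boxes lam, ((1 - eExp ε₁) * (1 - eExp ε₂) * eExp (-pos ε₁ ε₂ a y) * eExp ξ) := by
      simp only [KS, Finset.mul_sum, Finset.sum_mul]
    rw [this, Sg, Finset.mul_sum, Finset.sum_mul, sub_eq_add_neg, ← Finset.sum_neg_distrib]
    congr 1
    · refine Finset.sum_congr rfl fun y _ => ?_
      simp only [sub_eq_add_neg, ← eExp_mul]
      ring
    · refine Finset.sum_congr rfl fun y _ => ?_
      generalize pos ε₁ ε₂ a y = η
      rw [show ξ + (ε₁ + ε₂) - (η + ε₁) = ε₂ + (-η + ξ) by ring,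
        show ξ + (ε₁ + ε₂) - (η + ε₂) = ε₁ + (-η + ξ) by ring,
        show ξ + (ε₁ + ε₂) - η = ε₁ + (ε₂ + (-η + ξ)) by ring,
        show ξ + (ε₁ + ε₂) - (η + (ε₁ + ε₂)) = -η + ξ by ring]
      simp only [← eExp_mul]
      ring
  have h0 : eExp ξ * eExp (-ξ) = 1 := by rw [eExp_mul, add_neg_cancel, eExp_zero]
  rw [g1, g2, tangent_eq, tangent_eq, hK, hS, eExp_zero, ← eExp_mul ε₁ ε₂]
  linear_combination (-(1 - eExp ε₁) * (1 - eExp ε₂)) * h0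

/-! ### The multiplicative evaluation -/

/-- `nz` as a unit. -/
def nzu (w : ℂ) : ℂˣ := Units.mk0 (nz w) (nz_ne w)

/-- Evaluation `∏ w^{f(w)}` as an additive homomorphism. -/
def HH : AddMonoidAlgebra ℤ ℂ →+ Additive ℂˣ :=
  (Finsupp.liftAddHom fun w : ℂ =>
    (zmultiplesHom (Additive ℂˣ) (Additive.ofMul (nzu w)))).comp
    (AddMonoidAlgebra.coeffAddEquiv (R := ℤ) (M := ℂ)).toAddMonoidHom

lemma HH_single (w : ℂ) : HH (AddMonoidAlgebra.single w 1) = Additive.ofMul (nzu w) := by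
  change Finsupp.liftAddHom _ (Finsupp.single w (1 : ℤ)) = _
  simp

/-- Evaluation `∏ w^{f(w)}`. -/
def Hc (f : AddMonoidAlgebra ℤ ℂ) : ℂ := ((HH f).toMul : ℂˣ)

lemma Hc_add (f g : AddMonoidAlgebra ℤ ℂ) : Hc (f + g) = Hc f * Hc g := by
  simp [Hc]

lemma Hc_sub (f g : AddMonoidAlgebra ℤ ℂ) : Hc (f - g) = Hc f / Hc g := by
  simp [Hc]

lemma Hc_eExp (w : ℂ) : Hc (eExp w) = nz w := by
  simp [Hc, eExp, HH_single, nzu]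

lemma Hc_sum {ι : Type*} (t : Finset ι) (f : ι → AddMonoidAlgebra ℤ ℂ) :
    Hc (∑ i ∈ t, f i) = ∏ i ∈ t, Hc (f i) := by
  classical
  induction t using Finset.induction_on with
  | empty => simp [Hc]
  | insert i t hi ih => rw [Finset.sum_insert hi, Finset.prod_insert hi, Hc_add, ih]

lemma Hc_Sg (ε₁ ε₂ : ℂ) (a : Fin N → ℂ) (lam : Fin N → YoungDiagram)
    (g : ℂ → AddMonoidAlgebra ℤ ℂ) :
    Hc (Sg ε₁ ε₂ a lam g) = Sm ε₁ ε₂ a lam (fun w => Hc (g w)) := by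
  simp only [Sg, Sm, Hc_add, Hc_sum, Hc_sub]

/-- Coefficient of `e^0`. -/
def cz : AddMonoidAlgebra ℤ ℂ →+ ℤ :=
  (Finsupp.applyAddHom (0 : ℂ)).comp
    (AddMonoidAlgebra.coeffAddEquiv (R := ℤ) (M := ℂ)).toAddMonoidHom

lemma cz_single (w : ℂ) : cz (AddMonoidAlgebra.single w 1) = kd 0 w := by
  change (Finsupp.single w (1 : ℤ)) 0 = _
  simp [kd, Finsupp.single_apply, eq_comm]

/-- The product of a multiset from its character. -/
lemma prod_of_char (M : Multiset ℂ) (f : AddMonoidAlgebra ℤ ℂ)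
    (h : (M.map fun w => AddMonoidAlgebra.single w (1 : ℤ)).sum = f) :
    M.prod = if cz f = 0 then Hc f else 0 := by
  have key : (M.map fun w => nz w).prod = Hc f ∧ (M.count 0 : ℤ) = cz f := by
    subst h
    induction M using Multiset.induction_on with
    | empty => simp [Hc]
    | cons w M ih =>
      simp only [Multiset.map_cons, Multiset.prod_cons, Multiset.sum_cons, Hc_add, map_add,
        cz_single, ih.1, ← ih.2, Multiset.count_cons]
      constructor
      · congr 1
        exact (Hc_eExp w).symm
      · simp [kd, add_comm]
  rw [← key.1, ← key.2]
  split_ifs with h0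
  · have h1 : (0 : ℂ) ∉ M := by
      rw [← Multiset.count_eq_zero]
      exact_mod_cast h0
    have : M.map (fun w => nz w) = M := by
      conv_rhs => rw [← Multiset.map_id M]
      refine Multiset.map_congr rfl fun w hw => ?_
      have : w ≠ 0 := by
        rintro rfl
        exact h1 hw
      simp [nz, this]
    rw [this]
  · refine Multiset.prod_eq_zero ?_
    by_contra h1
    rw [← Multiset.count_eq_zero] at h1
    exact h0 (by exact_mod_cast h1)

/-! ### Recursion for the weights -/

lemma Sm_mul {A : Type*} [Field A] (ε₁ ε₂ : ℂ) (a : Fin N → ℂ) (lam : Fin N → YoungDiagram)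
    (g h : ℂ → A) :
    Sm ε₁ ε₂ a lam (fun w => g w * h w) = Sm ε₁ ε₂ a lam g * Sm ε₁ ε₂ a lam h := by
  unfold Sm
  rw [Finset.prod_mul_distrib, mul_mul_mul_comm]
  congr 1
  rw [← Finset.prod_mul_distrib]
  refine Finset.prod_congr rfl fun x _ => ?_
  rw [div_mul_div_comm, mul_mul_mul_comm, mul_mul_mul_comm (g (pos ε₁ ε₂ a x))]

lemma Sm_zpow (ε₁ ε₂ : ℂ) (a : Fin N → ℂ) (lam : Fin N → YoungDiagram) (n : ℂ → ℤ) :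
    Sm ε₁ ε₂ a lam (fun w => (-1 : ℂ) ^ n w) = (-1 : ℂ) ^ Sg ε₁ ε₂ a lam n := by
  have h1 : (-1 : ℂ) ≠ 0 := by norm_num
  have hs : ∀ {ι : Type} (t : Finset ι) (f : ι → ℤ),
      ∏ i ∈ t, (-1 : ℂ) ^ f i = (-1 : ℂ) ^ ∑ i ∈ t, f i := by
    intro ι t f
    classical
    induction t using Finset.induction_on with
    | empty => simp
    | insert i t hi ih => rw [Finset.prod_insert hi, Finset.sum_insert hi, zpow_add₀ h1, ih]
  unfold Sm Sg
  simp only [← zpow_add₀ h1, ← zpow_sub₀ h1, hs]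

lemma Sg_sub {A : Type*} [AddCommGroup A] (ε₁ ε₂ : ℂ) (a : Fin N → ℂ)
    (lam : Fin N → YoungDiagram) (g h : ℂ → A) :
    Sg ε₁ ε₂ a lam (fun w => g w - h w) = Sg ε₁ ε₂ a lam g - Sg ε₁ ε₂ a lam h := by
  unfold Sg
  rw [Finset.sum_sub_distrib, add_sub_add_comm]
  congr 1
  rw [← Finset.sum_sub_distrib]
  refine Finset.sum_congr rfl fun x _ => ?_
  dsimp only
  abel

lemma Sg_one (ε₁ ε₂ : ℂ) (a : Fin N → ℂ) (lam : Fin N → YoungDiagram) :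
    Sg ε₁ ε₂ a lam (fun _ => (1 : ℤ)) = N := by
  simp [Sg]

lemma nz_neg (ξ w : ℂ) : nz (w - ξ) = (-1 : ℂ) ^ (1 - kd ξ w) * nz (ξ - w) := by
  by_cases h : ξ = w
  · subst h
    simp [kd]
  · have h1 : w - ξ ≠ 0 := sub_ne_zero.2 (Ne.symm h)
    have h2 : ξ - w ≠ 0 := sub_ne_zero.2 h
    simp [nz, h1, h2, kd, h]

lemma Sm_neg (ε₁ ε₂ : ℂ) (a : Fin N → ℂ) (lam : Fin N → YoungDiagram) (ξ : ℂ) :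
    Sm ε₁ ε₂ a lam (fun w => nz (w - ξ)) =
      (-1 : ℂ) ^ ((N : ℤ) - Sg ε₁ ε₂ a lam (kd ξ)) * Sm ε₁ ε₂ a lam (fun w => nz (ξ - w)) := by
  simp only [nz_neg ξ]
  rw [Sm_mul, Sm_zpow, Sg_sub, Sg_one]

lemma card_boxes (lam : Fin N → YoungDiagram) : totalCard N lam = (boxes lam).card := by
  simp [totalCard, boxes, Finset.card_sigma]

lemma prod_adds (ε₁ ε₂ : ℂ) (hε₁ : ε₁ ≠ 0) (hε₂ : ε₂ ≠ 0) (hε : ε₁ + ε₂ ≠ 0) (a : Fin N → ℂ)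
    (T : (Fin N → YoungDiagram) → Multiset ℂ)
    (hT : ∀ lam : Fin N → YoungDiagram,
      ((T lam).map fun w => AddMonoidAlgebra.single w (1 : ℤ)).sum = tangentChar N ε₁ ε₂ a lam)
    {lam lam' : Fin N → YoungDiagram} {x : Σ _ : Fin N, ℕ × ℕ} (h : Adds lam lam' x)
    (h1 : Sg ε₁ ε₂ a lam (kd (pos ε₁ ε₂ a x)) = 1)
    (h2 : Sg ε₁ ε₂ a lam (kd (pos ε₁ ε₂ a x + (ε₁ + ε₂))) = 0) :
    (T lam').prod = (T lam).prod * ((-1 : ℂ) ^ ((N : ℤ) - 1) *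
      Sm ε₁ ε₂ a lam (fun w => nz (pos ε₁ ε₂ a x - w)) *
      Sm ε₁ ε₂ a lam' (fun w => nz (pos ε₁ ε₂ a x + (ε₁ + ε₂) - w))) := by
  have hcz : cz (tangentChar N ε₁ ε₂ a lam') = cz (tangentChar N ε₁ ε₂ a lam) := by
    rw [tangent_adds ε₁ ε₂ a h]
    simp only [map_add, map_sub, map_Sg, eExp, cz_single]
    have e1 : (fun w => kd 0 (w - pos ε₁ ε₂ a x)) = kd (pos ε₁ ε₂ a x) := by
      funext w
      simp only [kd, eq_comm (a := (0 : ℂ)), sub_eq_zero, eq_comm (a := w)]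
    have e2 : (fun w => kd 0 (pos ε₁ ε₂ a x + (ε₁ + ε₂) - w)) =
        kd (pos ε₁ ε₂ a x + (ε₁ + ε₂)) := by
      funext w
      simp only [kd, eq_comm (a := (0 : ℂ)), sub_eq_zero]
    rw [e1, e2, h1, h2]
    simp [kd, hε₁.symm, hε₂.symm, hε.symm]
  rw [prod_of_char _ _ (hT lam), prod_of_char _ _ (hT lam'), hcz]
  split_ifs with h0
  · rw [tangent_adds ε₁ ε₂ a h, Hc_add, Hc_add, Hc_add, Hc_Sg, Hc_Sg, Hc_sub, Hc_add, Hc_add]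
    simp only [Hc_eExp]
    rw [Sm_neg, h1, Sm_adds ε₁ ε₂ a h]
    have e1 : pos ε₁ ε₂ a x + (ε₁ + ε₂) - (pos ε₁ ε₂ a x + ε₁) = ε₂ := by ring
    have e2 : pos ε₁ ε₂ a x + (ε₁ + ε₂) - (pos ε₁ ε₂ a x + ε₂) = ε₁ := by ring
    have e3 : pos ε₁ ε₂ a x + (ε₁ + ε₂) - pos ε₁ ε₂ a x = ε₁ + ε₂ := by ring
    rw [e1, e2, e3, sub_self]
    ring
  · simp

lemma mu_adds (ε₁ ε₂ : ℂ) (hε₁ : ε₁ ≠ 0) (hε₂ : ε₂ ≠ 0) (hε : ε₁ + ε₂ ≠ 0) (a : Fin N → ℂ)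
    (m : Fin (2 * N) → ℂ)
    (T : (Fin N → YoungDiagram) → Multiset ℂ)
    (hT : ∀ lam : Fin N → YoungDiagram,
      ((T lam).map fun w => AddMonoidAlgebra.single w (1 : ℤ)).sum = tangentChar N ε₁ ε₂ a lam)
    {lam lam' : Fin N → YoungDiagram} {x : Σ _ : Fin N, ℕ × ℕ} (h : Adds lam lam' x)
    (h1 : Sg ε₁ ε₂ a lam (kd (pos ε₁ ε₂ a x)) = 1)
    (h2 : Sg ε₁ ε₂ a lam (kd (pos ε₁ ε₂ a x + (ε₁ + ε₂))) = 0) :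
    muHat N ε₁ ε₂ a m T lam' *
        Sm ε₁ ε₂ a lam' (fun w => nz (pos ε₁ ε₂ a x + (ε₁ + ε₂) - w)) +
      muHat N ε₁ ε₂ a m T lam * ((∏ f, (pos ε₁ ε₂ a x - m f)) *
        (Sm ε₁ ε₂ a lam (fun w => nz (pos ε₁ ε₂ a x - w)))⁻¹) = 0 := by
  have hn : ∀ l : Fin N → YoungDiagram, (∏ b : Fin N, ∏ c ∈ (l b).cells, ∏ f : Fin (2 * N),
        (a b + content ε₁ ε₂ c - m f)) = ∏ y ∈ boxes l, ∏ f, (pos ε₁ ε₂ a y - m f) := by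
    intro l
    unfold boxes
    rw [Finset.prod_sigma]
    rfl
  have hs := prod_adds ε₁ ε₂ hε₁ hε₂ hε a T hT h h1 h2
  have hA := Sm_ne_zero ε₁ ε₂ a lam' (fun w => nz (pos ε₁ ε₂ a x + (ε₁ + ε₂) - w))
    fun w => nz_ne _
  have hB := Sm_ne_zero ε₁ ε₂ a lam (fun w => nz (pos ε₁ ε₂ a x - w)) fun w => nz_ne _
  unfold muHat
  rw [hn, hn, hs, card_boxes, card_boxes, h.2, Finset.prod_insert h.1, Finset.card_insert_of_notMem h.1]
  generalize Sm ε₁ ε₂ a lam' (fun w => nz (pos ε₁ ε₂ a x + (ε₁ + ε₂) - w)) = A at *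
  generalize Sm ε₁ ε₂ a lam (fun w => nz (pos ε₁ ε₂ a x - w)) = B at *
  rcases eq_or_ne (T lam).prod 0 with h0 | h0
  · simp [h0]
  · rw [mul_add, pow_add, mul_one, zpow_sub₀ (by norm_num), zpow_natCast, zpow_one]
    have : ((-1 : ℂ) ^ N) ≠ 0 := pow_ne_zero _ (by norm_num)
    field_simp
    ring

/-! ### Combinatorics of orders -/

lemma mem_boxes (lam : Fin N → YoungDiagram) (b : Fin N) (c : ℕ × ℕ) :
    (⟨b, c⟩ : Σ _ : Fin N, ℕ × ℕ) ∈ boxes lam ↔ c ∈ (lam b).cells := by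
  simp [boxes]

lemma boxes_inj {l l' : Fin N → YoungDiagram} (h : boxes l = boxes l') : l = l' := by
  funext b
  ext c
  rw [← mem_boxes, h, mem_boxes]

/-- Membership with integer coordinates. -/
def MM (lam : Fin N → YoungDiagram) (b : Fin N) (i j : ℤ) : Prop :=
  0 ≤ i ∧ 0 ≤ j ∧ (i.toNat, j.toNat) ∈ (lam b).cells

lemma MM_nat (lam : Fin N → YoungDiagram) (b : Fin N) (i j : ℕ) :
    MM lam b i j ↔ (i, j) ∈ (lam b).cells := by
  simp [MM]

lemma MM.mono {lam : Fin N → YoungDiagram} {b : Fin N} {i j i' j' : ℤ} (h : MM lam b i j)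
    (hi : 0 ≤ i') (hj : 0 ≤ j') (hi' : i' ≤ i) (hj' : j' ≤ j) : MM lam b i' j' := by
  refine ⟨hi, hj, (lam b).isLowerSet (Prod.mk_le_mk.2 ⟨?_, ?_⟩) h.2.2⟩ <;> omega

open Classical in
/-- Indicator of membership. -/
def ind (lam : Fin N → YoungDiagram) (b : Fin N) (i j : ℤ) : ℤ := if MM lam b i j then 1 else 0

section gen
variable (ε₁ ε₂ : ℂ) (a : Fin N → ℂ)

/-- Lattice point. -/
def pt (b : Fin N) (i j : ℤ) : ℂ := a b + (i : ℂ) * ε₁ + (j : ℂ) * ε₂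

lemma pos_eq_pt (b : Fin N) (c : ℕ × ℕ) : pos ε₁ ε₂ a ⟨b, c⟩ = pt ε₁ ε₂ a b c.1 c.2 := by
  simp [pos, pt, content, add_assoc]

lemma pt_inj
    (hgen : ∀ b c : Fin N, ∀ i j : ℤ,
      a b - a c + (i : ℂ) * ε₁ + (j : ℂ) * ε₂ = 0 → b = c ∧ i = 0 ∧ j = 0)
    {b b' : Fin N} {i j i' j' : ℤ} :
    pt ε₁ ε₂ a b i j = pt ε₁ ε₂ a b' i' j' ↔ b = b' ∧ i = i' ∧ j = j' := by
  constructor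
  · intro h
    obtain ⟨h1, h2, h3⟩ := hgen b b' (i - i') (j - j') (by
      unfold pt at h
      push_cast
      linear_combination h)
    exact ⟨h1, by omega, by omega⟩
  · rintro ⟨rfl, rfl, rfl⟩
    rfl

lemma pos_inj
    (hgen : ∀ b c : Fin N, ∀ i j : ℤ,
      a b - a c + (i : ℂ) * ε₁ + (j : ℂ) * ε₂ = 0 → b = c ∧ i = 0 ∧ j = 0)
    {x y : Σ _ : Fin N, ℕ × ℕ} (h : pos ε₁ ε₂ a x = pos ε₁ ε₂ a y) : x = y := by
  obtain ⟨b, i, j⟩ := x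
  obtain ⟨b', i', j'⟩ := y
  rw [pos_eq_pt, pos_eq_pt, pt_inj ε₁ ε₂ a hgen] at h
  obtain ⟨rfl, h1, h2⟩ := h
  simp at h1 h2
  simp [h1, h2]

lemma sum_kd_pos
    (hgen : ∀ b c : Fin N, ∀ i j : ℤ,
      a b - a c + (i : ℂ) * ε₁ + (j : ℂ) * ε₂ = 0 → b = c ∧ i = 0 ∧ j = 0)
    (lam : Fin N → YoungDiagram) (b : Fin N) (i j : ℤ) :
    ∑ x ∈ boxes lam, kd (pt ε₁ ε₂ a b i j) (pos ε₁ ε₂ a x) = ind lam b i j := by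
  classical
  unfold ind
  split_ifs with h
  · rw [Finset.sum_eq_single (⟨b, i.toNat, j.toNat⟩ : Σ _ : Fin N, ℕ × ℕ)]
    · rw [pos_eq_pt]
      simp [kd, h.1, h.2.1]
    · rintro ⟨b', i', j'⟩ _ hne
      rw [pos_eq_pt, kd, if_neg]
      rw [pt_inj ε₁ ε₂ a hgen]
      rintro ⟨rfl, rfl, rfl⟩
      simp at hne
    · intro h'
      exact absurd ((mem_boxes _ _ _).2 h.2.2) h'
  · refine Finset.sum_eq_zero ?_
    rintro ⟨b', i', j'⟩ hx
    rw [pos_eq_pt, kd, if_neg]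
    rw [pt_inj ε₁ ε₂ a hgen]
    rintro ⟨rfl, rfl, rfl⟩
    exact h ((MM_nat _ _ _ _).2 ((mem_boxes _ _ _).1 hx))

lemma Sg_pt
    (hgen : ∀ b c : Fin N, ∀ i j : ℤ,
      a b - a c + (i : ℂ) * ε₁ + (j : ℂ) * ε₂ = 0 → b = c ∧ i = 0 ∧ j = 0)
    (lam : Fin N → YoungDiagram) (b : Fin N) (i j : ℤ) :
    Sg ε₁ ε₂ a lam (kd (pt ε₁ ε₂ a b i j)) = (if i = 0 ∧ j = 0 then 1 else 0) +
      (ind lam b (i - 1) j + ind lam b i (j - 1) - (ind lam b i j + ind lam b (i - 1) (j - 1))) := by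
  unfold Sg
  rw [Finset.sum_sub_distrib, Finset.sum_add_distrib, Finset.sum_add_distrib]
  have s1 : ∀ w, kd (pt ε₁ ε₂ a b i j) (w + ε₁) = kd (pt ε₁ ε₂ a b (i - 1) j) w := by
    intro w
    simp only [kd]
    congr 1
    rw [eq_iff_iff, pt, pt]
    push_cast
    constructor <;> intro h <;> linear_combination h
  have s2 : ∀ w, kd (pt ε₁ ε₂ a b i j) (w + ε₂) = kd (pt ε₁ ε₂ a b i (j - 1)) w := by
    intro w
    simp only [kd]
    congr 1
    rw [eq_iff_iff, pt, pt]
    push_cast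
    constructor <;> intro h <;> linear_combination h
  have s3 : ∀ w, kd (pt ε₁ ε₂ a b i j) (w + (ε₁ + ε₂)) =
      kd (pt ε₁ ε₂ a b (i - 1) (j - 1)) w := by
    intro w
    simp only [kd]
    congr 1
    rw [eq_iff_iff, pt, pt]
    push_cast
    constructor <;> intro h <;> linear_combination h
  simp only [s1, s2, s3, sum_kd_pos ε₁ ε₂ a hgen]
  congr 1
  have s4 : ∀ c, kd (pt ε₁ ε₂ a b i j) (a c) = if b = c then (if i = 0 ∧ j = 0 then 1 else 0)
      else 0 := by
    intro c
    have : a c = pt ε₁ ε₂ a c 0 0 := by simp [pt]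
    rw [this, kd]
    simp only [pt_inj ε₁ ε₂ a hgen]
    split_ifs <;> tauto
  simp [s4]

/-- Points where the order is nonzero are lattice points. -/
lemma exists_pt (lam : Fin N → YoungDiagram) (z : ℂ) (h : Sg ε₁ ε₂ a lam (kd z) ≠ 0) :
    ∃ b i j, z = pt ε₁ ε₂ a b i j := by
  by_contra hne
  push Not at hne
  have h0 : ∀ b i j, kd z (pt ε₁ ε₂ a b i j) = 0 := fun b i j => by simp [kd, hne]
  apply h
  unfold Sg
  rw [Finset.sum_eq_zero, Finset.sum_eq_zero]
  · rfl
  · rintro ⟨b, i, j⟩ _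
    have e0 := h0 b i j
    have e1 := h0 b (i + 1) j
    have e2 := h0 b i (j + 1)
    have e3 := h0 b (i + 1) (j + 1)
    have r0 : pos ε₁ ε₂ a ⟨b, i, j⟩ = pt ε₁ ε₂ a b i j := by rw [pos_eq_pt]
    have r1 : pt ε₁ ε₂ a b i j + ε₁ = pt ε₁ ε₂ a b (i + 1) j := by
      simp only [pt]; push_cast; ring
    have r2 : pt ε₁ ε₂ a b i j + ε₂ = pt ε₁ ε₂ a b i (j + 1) := by
      simp only [pt]; push_cast; ring
    have r3 : pt ε₁ ε₂ a b i j + (ε₁ + ε₂) = pt ε₁ ε₂ a b (i + 1) (j + 1) := by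
      simp only [pt]; push_cast; ring
    rw [r0, r1, r2, r3, e0, e1, e2, e3]
    rfl
  · intro b _
    have := h0 b 0 0
    simpa [pt] using this

lemma adds_of_insert (lam : Fin N → YoungDiagram) (b : Fin N) (c : ℕ × ℕ)
    (h : c ∉ (lam b).cells)
    (hl : IsLowerSet ((insert c (lam b).cells : Finset (ℕ × ℕ)) : Set (ℕ × ℕ))) :
    ∃ lam', Adds lam lam' ⟨b, c⟩ := by
  classical
  refine ⟨Function.update lam b ⟨_, hl⟩, by rwa [mem_boxes], ?_⟩
  ext ⟨b', c'⟩
  rw [mem_boxes, Finset.mem_insert, mem_boxes]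
  by_cases hb : b' = b
  · subst hb
    simp
  · simp [hb]

lemma adds_of_erase (lam : Fin N → YoungDiagram) (b : Fin N) (c : ℕ × ℕ)
    (h : c ∈ (lam b).cells)
    (hl : IsLowerSet (((lam b).cells.erase c : Finset (ℕ × ℕ)) : Set (ℕ × ℕ))) :
    ∃ lam', Adds lam' lam ⟨b, c⟩ := by
  classical
  refine ⟨Function.update lam b ⟨_, hl⟩, by rw [mem_boxes]; simp, ?_⟩
  ext ⟨b', c'⟩
  rw [mem_boxes, Finset.mem_insert, mem_boxes]
  by_cases hb : b' = b
  · subst hb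
    by_cases hc : c' = c
    · subst hc
      simpa using h
    · simp [hc]
  · simp [hb]

/-- Positive order: the point is an addable box. -/
lemma addable_of_pos
    (hgen : ∀ b c : Fin N, ∀ i j : ℤ,
      a b - a c + (i : ℂ) * ε₁ + (j : ℂ) * ε₂ = 0 → b = c ∧ i = 0 ∧ j = 0)
    (lam : Fin N → YoungDiagram) (z : ℂ) (h : 0 < Sg ε₁ ε₂ a lam (kd z)) :
    ∃ x lam', Adds lam lam' x ∧ z = pos ε₁ ε₂ a x := by
  classical
  obtain ⟨b, i, j, rfl⟩ := exists_pt ε₁ ε₂ a lam z h.ne'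
  rw [Sg_pt ε₁ ε₂ a hgen] at h
  have m1 : MM lam b i j → 0 < i → MM lam b (i - 1) j := fun q hi =>
    q.mono (by omega) q.2.1 (by omega) le_rfl
  have m2 : MM lam b i j → 0 < j → MM lam b i (j - 1) := fun q hi =>
    q.mono q.1 (by omega) le_rfl (by omega)
  have m3 : MM lam b (i - 1) j → 0 < j → MM lam b (i - 1) (j - 1) := fun q hi =>
    q.mono q.1 (by omega) le_rfl (by omega)
  have m4 : MM lam b i (j - 1) → 0 < i → MM lam b (i - 1) (j - 1) := fun q hi =>
    q.mono (by omega) q.2.1 (by omega) le_rfl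
  have n1 : MM lam b (i - 1) j → 1 ≤ i ∧ 0 ≤ j := fun q => ⟨by have := q.1; omega, q.2.1⟩
  have n2 : MM lam b i (j - 1) → 0 ≤ i ∧ 1 ≤ j := fun q => ⟨q.1, by have := q.2.1; omega⟩
  have key : 0 ≤ i ∧ 0 ≤ j ∧ ¬ MM lam b i j ∧ (0 < i → MM lam b (i - 1) j) ∧
      (0 < j → MM lam b i (j - 1)) := by
    unfold ind at h
    grind
  obtain ⟨hi, hj, h0, h1, h2⟩ := key
  lift i to ℕ using hi
  lift j to ℕ using hj
  rw [MM_nat] at h0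
  obtain ⟨lam', hl⟩ := adds_of_insert lam b (i, j) h0 (by
    rintro ⟨i', j'⟩ ⟨k, l⟩ hle hm
    rw [Prod.mk_le_mk] at hle
    simp only [Finset.coe_insert, Set.mem_insert_iff, Finset.mem_coe] at hm ⊢
    rcases hm with hm | hm
    · rw [Prod.mk.injEq] at hm
      obtain ⟨rfl, rfl⟩ := hm
      by_cases hk : k = i'
      · by_cases hll : l = j'
        · left; simp [hk, hll]
        · right
          have := (h2 (by omega)).mono (i' := k) (j' := l) (by omega) (by omega) (by omega)
            (by omega)
          exact (MM_nat _ _ _ _).1 this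
      · right
        have := (h1 (by omega)).mono (i' := k) (j' := l) (by omega) (by omega) (by omega)
            (by omega)
        exact (MM_nat _ _ _ _).1 this
    · right
      exact (lam b).isLowerSet (Prod.mk_le_mk.2 hle) hm)
  exact ⟨_, lam', hl, by rw [pos_eq_pt]⟩

/-- Negative order: the point is a shifted removable box. -/
lemma removable_of_neg
    (hgen : ∀ b c : Fin N, ∀ i j : ℤ,
      a b - a c + (i : ℂ) * ε₁ + (j : ℂ) * ε₂ = 0 → b = c ∧ i = 0 ∧ j = 0)
    (lam : Fin N → YoungDiagram) (z : ℂ)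
    (h : Sg ε₁ ε₂ a lam (kd (z + (ε₁ + ε₂))) < 0) :
    ∃ x lam', Adds lam' lam x ∧ z = pos ε₁ ε₂ a x := by
  classical
  obtain ⟨b, i, j, hz⟩ := exists_pt ε₁ ε₂ a lam _ h.ne
  rw [hz, Sg_pt ε₁ ε₂ a hgen] at h
  have m1 : MM lam b i j → 0 < i → MM lam b (i - 1) j := fun q hi =>
    q.mono (by omega) q.2.1 (by omega) le_rfl
  have m2 : MM lam b i j → 0 < j → MM lam b i (j - 1) := fun q hi =>
    q.mono q.1 (by omega) le_rfl (by omega)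
  have n0 : MM lam b i j → 0 ≤ i ∧ 0 ≤ j := fun q => ⟨q.1, q.2.1⟩
  have n3 : MM lam b (i - 1) (j - 1) → 1 ≤ i ∧ 1 ≤ j := fun q =>
    ⟨by have := q.1; omega, by have := q.2.1; omega⟩
  have key : 1 ≤ i ∧ 1 ≤ j ∧ MM lam b (i - 1) (j - 1) ∧ ¬ MM lam b (i - 1) j ∧
      ¬ MM lam b i (j - 1) := by
    have m3 : MM lam b (i - 1) j → 0 < j → MM lam b (i - 1) (j - 1) := fun q hi =>
      q.mono q.1 (by omega) le_rfl (by omega)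
    have m4 : MM lam b i (j - 1) → 0 < i → MM lam b (i - 1) (j - 1) := fun q hi =>
      q.mono (by omega) q.2.1 (by omega) le_rfl
    have m5 : MM lam b i j → i = 0 → j = 0 → True := fun _ _ _ => trivial
    unfold ind at h
    grind
  obtain ⟨hi, hj, h0, h1, h2⟩ := key
  obtain ⟨i, rfl⟩ : ∃ k : ℕ, i = k + 1 := ⟨(i - 1).toNat, by omega⟩
  obtain ⟨j, rfl⟩ : ∃ k : ℕ, j = k + 1 := ⟨(j - 1).toNat, by omega⟩
  simp only [add_sub_cancel_right] at h0 h1 h2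
  rw [MM_nat] at h0
  rw [← Nat.cast_succ, MM_nat] at h1 h2
  obtain ⟨lam', hl⟩ := adds_of_erase lam b (i, j) h0 (by
    rintro ⟨i', j'⟩ ⟨k, l⟩ hle hm
    rw [Prod.mk_le_mk] at hle
    simp only [Finset.coe_erase, Set.mem_sdiff, Set.mem_singleton_iff, Finset.mem_coe] at hm ⊢
    refine ⟨(lam b).isLowerSet (Prod.mk_le_mk.2 hle) hm.1, ?_⟩
    intro he
    rw [Prod.mk.injEq] at he
    obtain ⟨rfl, rfl⟩ := he
    by_cases hk : k = i'
    · by_cases hll : l = j'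
      · exact hm.2 (by simp [hk, hll])
      · exact h1 ((lam b).isLowerSet (Prod.mk_le_mk.2 ⟨by omega, by omega⟩) hm.1)
    · exact h2 ((lam b).isLowerSet (Prod.mk_le_mk.2 ⟨by omega, by omega⟩) hm.1))
  refine ⟨_, lam', hl, ?_⟩
  rw [pos_eq_pt]
  simp only [pt] at hz ⊢
  push_cast at hz ⊢
  linear_combination hz

lemma orders_of_adds
    (hgen : ∀ b c : Fin N, ∀ i j : ℤ,
      a b - a c + (i : ℂ) * ε₁ + (j : ℂ) * ε₂ = 0 → b = c ∧ i = 0 ∧ j = 0)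
    {lam lam' : Fin N → YoungDiagram} {x : Σ _ : Fin N, ℕ × ℕ}
    (h : Adds lam lam' x) :
    Sg ε₁ ε₂ a lam (kd (pos ε₁ ε₂ a x)) = 1 ∧
    Sg ε₁ ε₂ a lam (kd (pos ε₁ ε₂ a x + (ε₁ + ε₂))) = 0 := by
  classical
  obtain ⟨b, i, j⟩ := x
  obtain ⟨hx, hl⟩ := h
  rw [mem_boxes, ← MM_nat] at hx
  have hm : ∀ k l : ℕ, (k, l) ∈ (lam' b).cells ↔ (k, l) = (i, j) ∨ (k, l) ∈ (lam b).cells := by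
    intro k l
    rw [← mem_boxes, hl, Finset.mem_insert, mem_boxes]
    simp
  have hij : (i, j) ∈ (lam' b).cells := (hm i j).2 (Or.inl rfl)
  have a1 : 0 < (i : ℤ) → MM lam b (i - 1) j := by
    intro hi
    obtain ⟨i, rfl⟩ : ∃ k : ℕ, i = k + 1 := ⟨i - 1, by omega⟩
    have : (i, j) ∈ (lam' b).cells :=
      (lam' b).isLowerSet (Prod.mk_le_mk.2 ⟨by omega, le_rfl⟩) hij
    rw [hm] at this
    push_cast
    rw [add_sub_cancel_right, MM_nat]
    simpa using this
  have a2 : 0 < (j : ℤ) → MM lam b i (j - 1) := by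
    intro hi
    obtain ⟨j, rfl⟩ : ∃ k : ℕ, j = k + 1 := ⟨j - 1, by omega⟩
    have : (i, j) ∈ (lam' b).cells :=
      (lam' b).isLowerSet (Prod.mk_le_mk.2 ⟨le_rfl, by omega⟩) hij
    rw [hm] at this
    push_cast
    rw [add_sub_cancel_right, MM_nat]
    simpa using this
  constructor
  · rw [pos_eq_pt, Sg_pt ε₁ ε₂ a hgen]
    have m3 : MM lam b (i - 1) j → 0 < (j : ℤ) → MM lam b (i - 1) (j - 1) := fun q hi =>
      q.mono q.1 (by omega) le_rfl (by omega)
    have n1 : MM lam b (i - 1) j → 1 ≤ (i : ℤ) := fun q => by have := q.1; omega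
    have n2 : MM lam b i (j - 1) → 1 ≤ (j : ℤ) := fun q => by have := q.2.1; omega
    have n3 : MM lam b (i - 1) (j - 1) → 1 ≤ (i : ℤ) ∧ 1 ≤ (j : ℤ) := fun q =>
      ⟨by have := q.1; omega, by have := q.2.1; omega⟩
    have p1 : 0 ≤ (i : ℤ) := by omega
    have p2 : 0 ≤ (j : ℤ) := by omega
    unfold ind
    simp only [hx]
    generalize (i : ℤ) = i at *
    generalize (j : ℤ) = j at *
    clear hm hl hij
    grind
  · have e : pos ε₁ ε₂ a ⟨b, i, j⟩ + (ε₁ + ε₂) = pt ε₁ ε₂ a b (i + 1) (j + 1) := by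
      rw [pos_eq_pt]
      simp only [pt]
      push_cast
      ring
    rw [e, Sg_pt ε₁ ε₂ a hgen, add_sub_cancel_right, add_sub_cancel_right]
    have k1 : ¬ MM lam b (i + 1) j := fun q => hx (q.mono (by omega) (by omega) (by omega) le_rfl)
    have k2 : ¬ MM lam b i (j + 1) := fun q => hx (q.mono (by omega) (by omega) le_rfl (by omega))
    have k3 : ¬ MM lam b (i + 1) (j + 1) := fun q =>
      hx (q.mono (by omega) (by omega) (by omega) (by omega))
    have k4 : ¬ ((i : ℤ) + 1 = 0 ∧ (j : ℤ) + 1 = 0) := by omega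
    simp [ind, hx, k1, k2, k3, k4]
end gen

/-! ### Finiteness and the final assembly -/

lemma finite_card (k : ℕ) : {lam : Fin N → YoungDiagram | totalCard N lam = k}.Finite := by
  have hf : Function.Injective fun (lam : Fin N → YoungDiagram) (b : Fin N) => (lam b).cells := by
    intro l l' h
    funext b
    exact YoungDiagram.ext (congrFun h b)
  have hfin : {g : Fin N → Finset (ℕ × ℕ) |
      ∀ b, g b ∈ (Finset.range k ×ˢ Finset.range k).powerset}.Finite := by
    have := Set.Finite.pi (ι := Fin N) (t := fun _ : Fin N =>
      (((Finset.range k ×ˢ Finset.range k).powerset : Finset (Finset (ℕ × ℕ))) :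
        Set (Finset (ℕ × ℕ)))) (fun _ => Finset.finite_toSet _)
    refine this.subset fun g hg => ?_
    intro b _
    exact hg b
  refine (hfin.preimage hf.injOn).subset ?_
  intro lam hlam b
  have hle : (lam b).cells.card ≤ k := by
    rw [← (hlam : totalCard N lam = k)]
    exact Finset.single_le_sum (f := fun b => (lam b).card) (fun _ _ => Nat.zero_le _)
      (Finset.mem_univ b)
  rw [Finset.mem_powerset]
  rintro ⟨i, j⟩ hij
  rw [Finset.mem_product, Finset.mem_range, Finset.mem_range]
  constructor
  · have : ((Finset.range (i + 1)).image fun t => (t, j)) ⊆ (lam b).cells := by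
      intro c hc
      simp only [Finset.mem_image, Finset.mem_range] at hc
      obtain ⟨t, ht, rfl⟩ := hc
      exact (lam b).isLowerSet (Prod.mk_le_mk.2 ⟨by omega, le_rfl⟩) hij
    have h2 := Finset.card_le_card this
    rw [Finset.card_image_of_injective _ (fun s t h => (Prod.mk.inj h).1), Finset.card_range] at h2
    exact Nat.lt_of_lt_of_le (Nat.lt_succ_self i) (h2.trans hle)
  · have : ((Finset.range (j + 1)).image fun t => (i, t)) ⊆ (lam b).cells := by
      intro c hc
      simp only [Finset.mem_image, Finset.mem_range] at hc
      obtain ⟨t, ht, rfl⟩ := hc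
      exact (lam b).isLowerSet (Prod.mk_le_mk.2 ⟨le_rfl, by omega⟩) hij
    have h2 := Finset.card_le_card this
    rw [Finset.card_image_of_injective _ (fun s t h => (Prod.mk.inj h).2), Finset.card_range] at h2
    exact Nat.lt_of_lt_of_le (Nat.lt_succ_self j) (h2.trans hle)

lemma RegV_Pmat (m : Fin (2 * N) → ℂ) (z : ℂ) : RegV z (Pmat N m 0) (∏ f, (z - m f)) := by
  unfold Pmat
  refine RegV.prod _ fun f _ => ?_
  simpa using RegV.lin z 0 (m f)

lemma Adds.unique_right {l l₁ l₂ : Fin N → YoungDiagram} {x : Σ _ : Fin N, ℕ × ℕ}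
    (h₁ : Adds l l₁ x) (h₂ : Adds l l₂ x) : l₁ = l₂ :=
  boxes_inj (h₁.2.trans h₂.2.symm)

lemma Adds.unique_left {l l₁ l₂ : Fin N → YoungDiagram} {x : Σ _ : Fin N, ℕ × ℕ}
    (h₁ : Adds l₁ l x) (h₂ : Adds l₂ l x) : l₁ = l₂ := by
  apply boxes_inj
  rw [← Finset.erase_insert h₁.1, ← h₁.2, h₂.2, Finset.erase_insert h₂.1]

lemma Adds.card {l l' : Fin N → YoungDiagram} {x : Σ _ : Fin N, ℕ × ℕ}
    (h : Adds l l' x) : totalCard N l' = totalCard N l + 1 := by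
  rw [card_boxes, card_boxes, h.2, Finset.card_insert_of_notMem h.1]

end

/-- Regularity of the averaged fundamental qq-character: coefficientwise in the
instanton counting parameter, the average of `𝒳(x) = Y(x+ε) + 𝔮·P(x)/Y(x)` against
the instanton pseudo-measure has no poles in `x`. -/
theorem averaged_qq_character_regular (N : ℕ) (hN : 1 ≤ N) (ε₁ ε₂ : ℂ) (a : Fin N → ℂ)
    (hgen : ∀ b c : Fin N, ∀ i j : ℤ,
      a b - a c + (i : ℂ) * ε₁ + (j : ℂ) * ε₂ = 0 → b = c ∧ i = 0 ∧ j = 0)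
    (m : Fin (2 * N) → ℂ)
    (T : (Fin N → YoungDiagram) → Multiset ℂ)
    (hT : ∀ lam : Fin N → YoungDiagram,
      ((T lam).map fun w => AddMonoidAlgebra.single w (1 : ℤ)).sum = tangentChar N ε₁ ε₂ a lam)
    (k : ℕ) (hk : 1 ≤ k) :
    ∃ p : Polynomial ℂ,
      (∑ᶠ lam ∈ {lam : Fin N → YoungDiagram | totalCard N lam = k},
          RatFunc.C (muHat N ε₁ ε₂ a m T lam) * Yobs N ε₁ ε₂ a (ε₁ + ε₂) lam) +
        (∑ᶠ lam ∈ {lam : Fin N → YoungDiagram | totalCard N lam = k - 1},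
          RatFunc.C (muHat N ε₁ ε₂ a m T lam) * (Pmat N m 0 / Yobs N ε₁ ε₂ a 0 lam)) =
      algebraMap (Polynomial ℂ) (RatFunc ℂ) p := by
  classical
  have hε₁ : ε₁ ≠ 0 := by
    intro h
    have := hgen ⟨0, hN⟩ ⟨0, hN⟩ 1 0 (by simp [h])
    simp at this
  have hε₂ : ε₂ ≠ 0 := by
    intro h
    have := hgen ⟨0, hN⟩ ⟨0, hN⟩ 0 1 (by simp [h])
    simp at this
  have hε : ε₁ + ε₂ ≠ 0 := by
    intro h
    have := hgen ⟨0, hN⟩ ⟨0, hN⟩ 1 1 (by simpa using h)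
    simp at this
  apply poly_of_reg
  intro z
  rw [finsum_mem_eq_finite_toFinset_sum _ (finite_card k),
    finsum_mem_eq_finite_toFinset_sum _ (finite_card (k - 1))]
  set A := (finite_card (N := N) k).toFinset with hA
  set B := (finite_card (N := N) (k - 1)).toFinset with hB
  have mA : ∀ l, l ∈ A ↔ totalCard N l = k := fun l => by simp [hA]
  have mB : ∀ l, l ∈ B ↔ totalCard N l = k - 1 := fun l => by simp [hB]
  -- regular terms
  have rA : ∀ l, (¬ ∃ x l', Adds l' l x ∧ z = pos ε₁ ε₂ a x) →
      Reg z (RatFunc.C (muHat N ε₁ ε₂ a m T l) * Yobs N ε₁ ε₂ a (ε₁ + ε₂) l) := by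
    intro l hl
    refine Reg.mul ⟨_, RegV.const _ _⟩ ((Lead_Yobs z ε₁ ε₂ a (ε₁ + ε₂) l).reg ?_)
    by_contra hneg
    exact hl (removable_of_neg ε₁ ε₂ a hgen l z (not_le.1 hneg))
  have rB : ∀ l, (¬ ∃ x l', Adds l l' x ∧ z = pos ε₁ ε₂ a x) →
      Reg z (RatFunc.C (muHat N ε₁ ε₂ a m T l) * (Pmat N m 0 / Yobs N ε₁ ε₂ a 0 l)) := by
    intro l hl
    rw [div_eq_mul_inv]
    refine Reg.mul ⟨_, RegV.const _ _⟩ (Reg.mul ⟨_, RegV_Pmat m z⟩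
      ((Lead_Yobs z ε₁ ε₂ a 0 l).inv.reg ?_))
    by_contra hneg
    refine hl (addable_of_pos ε₁ ε₂ a hgen l z ?_)
    rw [add_zero] at hneg
    omega
  by_cases hz : ∃ x : (Σ _ : Fin N, ℕ × ℕ), z = pos ε₁ ε₂ a x
  swap
  · refine Reg.add (Reg.sum _ fun l _ => rA l ?_) (Reg.sum _ fun l _ => rB l ?_)
    · rintro ⟨x, -, -, hx⟩
      exact hz ⟨x, hx⟩
    · rintro ⟨x, -, -, hx⟩
      exact hz ⟨x, hx⟩
  obtain ⟨x, hx⟩ := hz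
  rw [← Finset.sum_filter_add_sum_filter_not A (fun l => ∃ l', Adds l' l x),
    ← Finset.sum_filter_add_sum_filter_not B (fun l => ∃ l', Adds l l' x)]
  rw [add_add_add_comm]
  refine Reg.add ?_ (Reg.add (Reg.sum _ fun l hl => rA l ?_) (Reg.sum _ fun l hl => rB l ?_))
  · have hbij : ∑ l ∈ A with ∃ l', Adds l' l x,
        RatFunc.C (muHat N ε₁ ε₂ a m T l) * Yobs N ε₁ ε₂ a (ε₁ + ε₂) l =
        ∑ l ∈ B with ∃ l', Adds l l' x,
          (if h : ∃ l', Adds l l' x then RatFunc.C (muHat N ε₁ ε₂ a m T h.choose) *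
            Yobs N ε₁ ε₂ a (ε₁ + ε₂) h.choose else 0) := by
      symm
      refine Finset.sum_bij (fun l hl => (Finset.mem_filter.1 hl).2.choose) ?_ ?_ ?_ ?_
      · intro l hl
        have h := (Finset.mem_filter.1 hl).2.choose_spec
        have h' := (mB l).1 (Finset.mem_filter.1 hl).1
        refine Finset.mem_filter.2 ⟨(mA _).2 ?_, l, h⟩
        rw [h.card, h']
        omega
      · intro l hl l₂ hl₂ he
        have h := (Finset.mem_filter.1 hl).2.choose_spec
        have h₂ := (Finset.mem_filter.1 hl₂).2.choose_spec
        rw [← he] at h₂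
        exact h.unique_left h₂
      · intro l hl
        obtain ⟨h1, l', h2⟩ := Finset.mem_filter.1 hl
        have hm : l' ∈ B.filter (fun l => ∃ l', Adds l l' x) := by
          refine Finset.mem_filter.2 ⟨(mB _).2 ?_, l, h2⟩
          have := h2.card
          have := (mA l).1 h1
          omega
        exact ⟨l', hm, (Finset.mem_filter.1 hm).2.choose_spec.unique_right h2⟩
      · intro l hl
        rw [dif_pos (Finset.mem_filter.1 hl).2]
    rw [hbij, ← Finset.sum_add_distrib]
    refine Reg.sum _ fun l hl => ?_
    have hex := (Finset.mem_filter.1 hl).2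
    rw [dif_pos hex]
    have hadd := hex.choose_spec
    generalize hex.choose = l' at hadd
    obtain ⟨h1, h2⟩ := orders_of_adds ε₁ ε₂ a hgen hadd
    have h3 : Sg ε₁ ε₂ a l' (kd (z + (ε₁ + ε₂))) = -1 := by
      rw [hx, Sg_adds ε₁ ε₂ a hadd, h2]
      simp [kd, hε₁, hε₂, hε]
    have s1 := Lead_Yobs z ε₁ ε₂ a (ε₁ + ε₂) l'
    rw [h3] at s1
    have s2 := (Lead_Yobs z ε₁ ε₂ a 0 l).inv
    rw [add_zero] at s2
    rw [show Sg ε₁ ε₂ a l (kd z) = 1 by rw [hx, h1]] at s2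
    have t1 := s1.sp.mul_reg (RegV.const z (muHat N ε₁ ε₂ a m T l'))
    have t2 := (s2.sp.mul_reg (RegV_Pmat m z)).mul_reg (RegV.const z (muHat N ε₁ ε₂ a m T l))
    have t3 := t1.add t2
    rw [hx, mu_adds ε₁ ε₂ hε₁ hε₂ hε a m T hT hadd h1 h2] at t3
    rw [div_eq_mul_inv, hx]
    exact t3.reg
  · rintro ⟨y, l', hl', hy⟩
    obtain rfl := pos_inj ε₁ ε₂ a hgen (hy.symm.trans hx)
    exact (Finset.mem_filter.1 hl).2 ⟨l', hl'⟩
  · rintro ⟨y, l', hl', hy⟩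
    obtain rfl := pos_inj ε₁ ε₂ a hgen (hy.symm.trans hx)
    exact (Finset.mem_filter.1 hl).2 ⟨l', hl'⟩
end
end

section
/- Fix N ≥ 1, m ≥ 1, and complex numbers ε₁, ε₂, a₁,…,a_N, ν₁,…,ν_m satisfying: a_b − a_c + ν_r − ν_s + iε₁ + jε₂ ≠ 0 for all b,c ∈ {1,…,N}, r,s ∈ {1,…,m} and all integers i,j, unless b=c, r=s and i=j=0. Let m₁,…,m_{2N} ∈ ℂ, P(x)=∏_{f=1}^{2N}(x−m_f), let μ̂(λ̄), Y(x)|_{λ̄} be as in the instanton pseudo-measure setting, and set R(z) = (z−ε₁)(z−ε₂)/[z(z−ε₁−ε₂)]. Then for every integer k ≥ 0, the rational function Σ_{I⊔J={1,…,m}} Σ_{λ̄ : |λ̄| = k−|J|} μ̂(λ̄)·∏_{i∈I, j∈J} R(ν_i−ν_j)·∏_{i∈I} Y(x−ν_i+ε)|_{λ̄}·∏_{j∈J} P(x−ν_j)/Y(x−ν_j)|_{λ̄} is a polynomial in x; i.e., the average of the higher qq-character 𝒳(x;ν) = Σ_{I⊔J} 𝔮^{|J|} ∏_{i∈I,j∈J}R(ν_i−ν_j)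 ∏_{i∈I}Y(x−ν_i+ε) ∏_{j∈J}P(x−ν_j)/Y(x−ν_j) against the instanton pseudo-measure is, coefficientwise in 𝔮, a regular function of x. -/
open scoped BigOperators

noncomputable section

/-- The structure factor `R(z) = (z−ε₁)(z−ε₂)/[z(z−ε₁−ε₂)]`. -/
def Rfac (ε₁ ε₂ z : ℂ) : ℂ := (z - ε₁) * (z - ε₂) / (z * (z - ε₁ - ε₂))


namespace QQ

/-- Addable boxes. -/
def addB (μ : YoungDiagram) : Finset (ℕ × ℕ) :=
  (insert (0, 0) (μ.cells.image (fun c => (c.1 + 1, c.2)) ∪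
    μ.cells.image (fun c => (c.1, c.2 + 1)))).filter
    (fun c => c ∉ μ ∧ (c.1 = 0 ∨ (c.1 - 1, c.2) ∈ μ) ∧ (c.2 = 0 ∨ (c.1, c.2 - 1) ∈ μ))

/-- Removable boxes. -/
def remB (μ : YoungDiagram) : Finset (ℕ × ℕ) :=
  μ.cells.filter (fun c => (c.1 + 1, c.2) ∉ μ ∧ (c.1, c.2 + 1) ∉ μ)

lemma mem_addB {μ : YoungDiagram} {c : ℕ × ℕ} : c ∈ addB μ ↔
    c ∉ μ ∧ (c.1 = 0 ∨ (c.1 - 1, c.2) ∈ μ) ∧ (c.2 = 0 ∨ (c.1, c.2 - 1) ∈ μ) := by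
  unfold addB
  rw [Finset.mem_filter, and_iff_right_iff_imp]
  rintro ⟨_, h2, h3⟩
  obtain ⟨i, j⟩ := c
  simp only [Finset.mem_insert, Finset.mem_union, Finset.mem_image, YoungDiagram.mem_cells,
    Prod.mk.injEq, Prod.exists]
  rcases i with _ | i
  · rcases j with _ | j
    · left; simp
    · right; right; refine ⟨0, j, ?_, rfl, rfl⟩; simpa using h3
  · right; left; refine ⟨i, j, ?_, rfl, rfl⟩; simpa using h2

lemma mem_remB {μ : YoungDiagram} {c : ℕ × ℕ} : c ∈ remB μ ↔
    c ∈ μ ∧ (c.1 + 1, c.2) ∉ μ ∧ (c.1, c.2 + 1) ∉ μ := by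
  simp [remB]

lemma count_map_inj (s : Finset (ℕ × ℕ)) (g : ℕ × ℕ → ℕ × ℕ) (hg : Function.Injective g)
    (p : ℕ × ℕ) : Multiset.count p (s.val.map g) = if p ∈ s.image g then 1 else 0 := by
  rw [← Finset.image_val_of_injOn hg.injOn]
  exact Multiset.count_eq_of_nodup (Finset.nodup _)

lemma key_multiset (μ : YoungDiagram) :
    ({(0, 0)} : Multiset (ℕ × ℕ)) + μ.cells.val.map (fun c => (c.1 + 1, c.2)) +
      μ.cells.val.map (fun c => (c.1, c.2 + 1)) + (remB μ).val.map (fun c => (c.1 + 1, c.2 + 1)) =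
    (addB μ).val + μ.cells.val + μ.cells.val.map (fun c => (c.1 + 1, c.2 + 1)) := by
  ext ⟨i, j⟩
  have e1 : Function.Injective (fun c : ℕ × ℕ => (c.1 + 1, c.2)) := by
    rintro ⟨a, b⟩ ⟨c, d⟩ h; simpa using h
  have e2 : Function.Injective (fun c : ℕ × ℕ => (c.1, c.2 + 1)) := by
    rintro ⟨a, b⟩ ⟨c, d⟩ h; simpa using h
  have e3 : Function.Injective (fun c : ℕ × ℕ => (c.1 + 1, c.2 + 1)) := by
    rintro ⟨a, b⟩ ⟨c, d⟩ h; simpa using h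
  simp only [Multiset.count_add]
  rw [count_map_inj _ _ e1, count_map_inj _ _ e2, count_map_inj _ _ e3, count_map_inj _ _ e3,
    Multiset.count_eq_of_nodup (Finset.nodup (addB μ)),
    Multiset.count_eq_of_nodup (Finset.nodup μ.cells), Multiset.count_singleton]
  simp only [Finset.mem_val, mem_addB, YoungDiagram.mem_cells, Prod.mk.injEq]
  have up := fun (i1 i2 j1 j2 : ℕ) (h1 : i1 ≤ i2) (h2 : j1 ≤ j2) => @YoungDiagram.up_left_mem μ i1 i2 j1 j2 h1 h2
  rcases i with _ | i <;> rcases j with _ | j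
  · simp; by_cases h : (0, 0) ∈ μ <;> simp [h]
  · have := up 0 0 j (j+1) (by simp) (by simp)
    simp
    by_cases h : (0, j + 1) ∈ μ <;> by_cases h' : (0, j) ∈ μ <;> simp_all
  · have := up i (i+1) 0 0 (by simp) (by simp)
    simp
    by_cases h : (i + 1, 0) ∈ μ <;> by_cases h' : (i, 0) ∈ μ <;> simp_all
  · have h1 := up i (i+1) (j+1) (j+1) (by simp) (by simp)
    have h2 := up (i+1) (i+1) j (j+1) (by simp) (by simp)
    have h3 := up i i j (j+1) (by simp) (by simp)
    have h4 := up i (i+1) j j (by simp) (by simp)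
    have r1 : ∀ s : Finset (ℕ × ℕ), (i + 1, j + 1) ∈ s.image (fun c : ℕ × ℕ => (c.1 + 1, c.2)) ↔
        (i, j + 1) ∈ s := fun s => e1.mem_finset_image (a := (i, j + 1))
    have r2 : ∀ s : Finset (ℕ × ℕ), (i + 1, j + 1) ∈ s.image (fun c : ℕ × ℕ => (c.1, c.2 + 1)) ↔
        (i + 1, j) ∈ s := fun s => e2.mem_finset_image (a := (i + 1, j))
    have r3 : ∀ s : Finset (ℕ × ℕ),
        (i + 1, j + 1) ∈ s.image (fun c : ℕ × ℕ => (c.1 + 1, c.2 + 1)) ↔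
        (i, j) ∈ s := fun s => e3.mem_finset_image (a := (i, j))
    simp only [r1, r2, r3, mem_remB, YoungDiagram.mem_cells]
    simp only [Nat.add_sub_cancel, Nat.succ_ne_zero, false_or, false_and, if_false]
    by_cases a1 : (i, j) ∈ μ <;> by_cases a2 : (i+1, j) ∈ μ <;> by_cases a3 : (i, j+1) ∈ μ <;>
      by_cases a4 : (i+1, j+1) ∈ μ <;> simp_all

lemma key_sum {M : Type*} [AddCommMonoid M] (μ : YoungDiagram) (f : ℕ × ℕ → M) :
    f (0, 0) + ∑ c ∈ μ.cells, f (c.1 + 1, c.2) + ∑ c ∈ μ.cells, f (c.1, c.2 + 1) +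
      ∑ c ∈ remB μ, f (c.1 + 1, c.2 + 1) =
    ∑ c ∈ addB μ, f c + ∑ c ∈ μ.cells, f c + ∑ c ∈ μ.cells, f (c.1 + 1, c.2 + 1) := by
  have := congrArg (fun s => (Multiset.map f s).sum) (key_multiset μ)
  simp only [Multiset.map_add, Multiset.map_map, Function.comp_def, Multiset.sum_add,
    Multiset.map_singleton, Multiset.sum_singleton] at this
  exact this

lemma key_prod {M : Type*} [CommMonoid M] (μ : YoungDiagram) (f : ℕ × ℕ → M) :
    f (0, 0) * (∏ c ∈ μ.cells, f (c.1 + 1, c.2)) * (∏ c ∈ μ.cells, f (c.1, c.2 + 1)) *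
      ∏ c ∈ remB μ, f (c.1 + 1, c.2 + 1) =
    (∏ c ∈ addB μ, f c) * (∏ c ∈ μ.cells, f c) * ∏ c ∈ μ.cells, f (c.1 + 1, c.2 + 1) := by
  have := congrArg (fun s => (Multiset.map f s).prod) (key_multiset μ)
  simp only [Multiset.map_add, Multiset.map_map, Function.comp_def, Multiset.prod_add,
    Multiset.map_singleton, Multiset.prod_singleton] at this
  exact this

/-- Remove a box. -/
def rmBox (μ : YoungDiagram) (c : ℕ × ℕ) : YoungDiagram :=
  if h : c ∈ remB μ then
    ⟨μ.cells.erase c, by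
      obtain ⟨h1, h2, h3⟩ := mem_remB.1 h
      rintro ⟨i, j⟩ ⟨i', j'⟩ hle hm
      simp only [Finset.coe_erase, Set.mem_sdiff, Set.mem_singleton_iff, Finset.mem_coe,
        YoungDiagram.mem_cells] at hm ⊢
      obtain ⟨hi, hj⟩ := Prod.mk_le_mk.1 hle
      refine ⟨μ.up_left_mem hi hj hm.1, ?_⟩
      rintro rfl
      apply hm.2
      have hi' : ¬ (i' + 1 ≤ i) := fun hh => h2 (μ.up_left_mem hh hj hm.1)
      have hj' : ¬ (j' + 1 ≤ j) := fun hh => h3 (μ.up_left_mem hi hh hm.1)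
      ext <;> simp <;> omega⟩
  else μ

/-- Add a box. -/
def adBox (μ : YoungDiagram) (c : ℕ × ℕ) : YoungDiagram :=
  if h : c ∈ addB μ then
    ⟨insert c μ.cells, by
      obtain ⟨h1, h2, h3⟩ := mem_addB.1 h
      rintro ⟨i, j⟩ ⟨i', j'⟩ hle hm
      simp only [Finset.coe_insert, Set.mem_insert_iff, Finset.mem_coe,
        YoungDiagram.mem_cells] at hm ⊢
      obtain ⟨hi, hj⟩ := Prod.mk_le_mk.1 hle
      rcases hm with rfl | hm
      · simp only at h2 h3
        by_cases e1 : i' = i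
        · by_cases e2 : j' = j
          · left; rw [e1, e2]
          · right
            exact μ.up_left_mem (by omega) (by omega) (h3.resolve_left (by omega))
        · right
          exact μ.up_left_mem (by omega) (by omega) (h2.resolve_left (by omega))
      · right; exact μ.up_left_mem hi hj hm⟩
  else μ

lemma rmBox_cells {μ : YoungDiagram} {c : ℕ × ℕ} (h : c ∈ remB μ) :
    (rmBox μ c).cells = μ.cells.erase c := by simp [rmBox, h]

lemma adBox_cells {μ : YoungDiagram} {c : ℕ × ℕ} (h : c ∈ addB μ) :
    (adBox μ c).cells = insert c μ.cells := by simp [adBox, h]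

lemma mem_rmBox {μ : YoungDiagram} {c d : ℕ × ℕ} (h : c ∈ remB μ) :
    d ∈ rmBox μ c ↔ d ≠ c ∧ d ∈ μ := by
  rw [← YoungDiagram.mem_cells, rmBox_cells h]; simp

lemma mem_adBox {μ : YoungDiagram} {c d : ℕ × ℕ} (h : c ∈ addB μ) :
    d ∈ adBox μ c ↔ d = c ∨ d ∈ μ := by
  rw [← YoungDiagram.mem_cells, adBox_cells h]; simp

lemma addB_rmBox {μ : YoungDiagram} {c : ℕ × ℕ} (h : c ∈ remB μ) : c ∈ addB (rmBox μ c) := by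
  have h1 := mem_remB.1 h
  rw [mem_addB, mem_rmBox h, mem_rmBox h, mem_rmBox h]
  obtain ⟨i, j⟩ := c
  refine ⟨by simp, ?_, ?_⟩
  · rcases i with _ | i
    · simp
    · right; refine ⟨by simp, μ.up_left_mem (by simp) le_rfl h1.1⟩
  · rcases j with _ | j
    · simp
    · right; refine ⟨by simp, μ.up_left_mem le_rfl (by simp) h1.1⟩

lemma remB_adBox {μ : YoungDiagram} {c : ℕ × ℕ} (h : c ∈ addB μ) : c ∈ remB (adBox μ c) := by
  have h1 := mem_addB.1 h
  rw [mem_remB, mem_adBox h, mem_adBox h, mem_adBox h]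
  obtain ⟨i, j⟩ := c
  refine ⟨by simp, ?_, ?_⟩
  · rintro (hh | hh)
    · simp at hh
    · exact h1.1 (μ.up_left_mem (by simp) le_rfl hh)
  · rintro (hh | hh)
    · simp at hh
    · exact h1.1 (μ.up_left_mem le_rfl (by simp) hh)

lemma adBox_rmBox {μ : YoungDiagram} {c : ℕ × ℕ} (h : c ∈ remB μ) : adBox (rmBox μ c) c = μ := by
  apply YoungDiagram.ext
  rw [adBox_cells (addB_rmBox h), rmBox_cells h, Finset.insert_erase]
  exact (μ.mem_cells c).2 (mem_remB.1 h).1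

lemma rmBox_adBox {μ : YoungDiagram} {c : ℕ × ℕ} (h : c ∈ addB μ) : rmBox (adBox μ c) c = μ := by
  apply YoungDiagram.ext
  rw [rmBox_cells (remB_adBox h), adBox_cells h, Finset.erase_insert]
  rw [μ.mem_cells c]; exact (mem_addB.1 h).1

lemma addB_card (μ : YoungDiagram) : (addB μ).card = (remB μ).card + 1 := by
  have := key_sum μ (fun _ => (1 : ℕ))
  simp at this
  omega

lemma finite_card (k : ℕ) : {μ : YoungDiagram | μ.card ≤ k}.Finite := by
  have hf : ((Finset.range k ×ˢ Finset.range k).powerset : Set (Finset (ℕ × ℕ))).Finite :=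
    Finset.finite_toSet _
  refine Set.Finite.of_finite_image (f := YoungDiagram.cells) (hf.subset ?_) ?_
  · rintro _ ⟨μ, hμ, rfl⟩
    simp only [Set.mem_ofPred_eq] at hμ
    simp only [Finset.coe_powerset, Set.mem_preimage, Set.mem_powerset_iff]
    rintro ⟨i, j⟩ hij
    simp only [Finset.mem_coe, YoungDiagram.mem_cells] at hij
    simp only [Finset.coe_product, Finset.coe_range, Set.mem_prod, Set.mem_Iio]
    have hc : (i + 1) * (j + 1) ≤ μ.card := by
      have : Finset.range (i + 1) ×ˢ Finset.range (j + 1) ⊆ μ.cells := by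
        rintro ⟨a, b⟩ hab
        simp only [Finset.mem_product, Finset.mem_range] at hab
        exact μ.up_left_mem (by omega) (by omega) hij
      simpa using Finset.card_le_card this
    constructor <;> nlinarith
  · intro μ _ ν _ h; exact YoungDiagram.ext h

end QQ

namespace QQ

/-- Index type of boxes in an `N`-tuple. -/
abbrev Bx (N : ℕ) := (_ : Fin N) × (ℕ × ℕ)

/-- Shifted content. -/
def wt {N : ℕ} (ε₁ ε₂ : ℂ) (a : Fin N → ℂ) (p : Bx N) : ℂ := a p.1 + content ε₁ ε₂ p.2

def cellS {N : ℕ} (lam : Fin N → YoungDiagram) : Finset (Bx N) :=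
  Finset.univ.sigma fun b => (lam b).cells
def addS {N : ℕ} (lam : Fin N → YoungDiagram) : Finset (Bx N) :=
  Finset.univ.sigma fun b => addB (lam b)
def remS {N : ℕ} (lam : Fin N → YoungDiagram) : Finset (Bx N) :=
  Finset.univ.sigma fun b => remB (lam b)
def rmT {N : ℕ} (lam : Fin N → YoungDiagram) (p : Bx N) : Fin N → YoungDiagram :=
  Function.update lam p.1 (rmBox (lam p.1) p.2)
def adT {N : ℕ} (lam : Fin N → YoungDiagram) (p : Bx N) : Fin N → YoungDiagram :=
  Function.update lam p.1 (adBox (lam p.1) p.2)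

lemma mem_cellS {N : ℕ} {lam : Fin N → YoungDiagram} {p : Bx N} :
    p ∈ cellS lam ↔ p.2 ∈ lam p.1 := by simp [cellS]
lemma mem_addS {N : ℕ} {lam : Fin N → YoungDiagram} {p : Bx N} :
    p ∈ addS lam ↔ p.2 ∈ addB (lam p.1) := by simp [addS]
lemma mem_remS {N : ℕ} {lam : Fin N → YoungDiagram} {p : Bx N} :
    p ∈ remS lam ↔ p.2 ∈ remB (lam p.1) := by simp [remS]

lemma addS_rmT {N : ℕ} {lam : Fin N → YoungDiagram} {p : Bx N} (h : p ∈ remS lam) :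
    p ∈ addS (rmT lam p) := by
  rw [mem_addS]; simp only [rmT, Function.update_self]; exact addB_rmBox (mem_remS.1 h)
lemma remS_adT {N : ℕ} {lam : Fin N → YoungDiagram} {p : Bx N} (h : p ∈ addS lam) :
    p ∈ remS (adT lam p) := by
  rw [mem_remS]; simp only [adT, Function.update_self]; exact remB_adBox (mem_addS.1 h)
lemma adT_rmT {N : ℕ} {lam : Fin N → YoungDiagram} {p : Bx N} (h : p ∈ remS lam) :
    adT (rmT lam p) p = lam := by
  simp [adT, rmT, adBox_rmBox (mem_remS.1 h)]
lemma rmT_adT {N : ℕ} {lam : Fin N → YoungDiagram} {p : Bx N} (h : p ∈ addS lam) :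
    rmT (adT lam p) p = lam := by
  simp [adT, rmT, rmBox_adBox (mem_addS.1 h)]

lemma cellS_rmT {N : ℕ} {lam : Fin N → YoungDiagram} {p : Bx N} (h : p ∈ remS lam) :
    cellS (rmT lam p) = (cellS lam).erase p := by
  ext ⟨b, c⟩
  obtain ⟨b0, c0⟩ := p
  rw [mem_cellS, Finset.mem_erase, mem_cellS]
  simp only [rmT]
  by_cases hb : b = b0
  · subst hb
    simp only [Function.update_self]
    rw [mem_rmBox (mem_remS.1 h)]
    simp
  · simp [hb]

lemma rem_mem_cell {N : ℕ} {lam : Fin N → YoungDiagram} {p : Bx N} (h : p ∈ remS lam) :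
    p ∈ cellS lam := mem_cellS.2 (mem_remB.1 (mem_remS.1 h)).1

lemma sum_rmT {M : Type*} [AddCommMonoid M] {N : ℕ} {lam : Fin N → YoungDiagram} {p : Bx N}
    (h : p ∈ remS lam) (f : Fin N → ℕ × ℕ → M) :
    ∑ b, ∑ c ∈ (lam b).cells, f b c = f p.1 p.2 + ∑ b, ∑ c ∈ (rmT lam p b).cells, f b c := by
  rw [Finset.sum_sigma', Finset.sum_sigma']
  have := cellS_rmT h
  unfold cellS at this
  rw [this]
  exact (Finset.add_sum_erase _ (fun x : Bx N => f x.1 x.2) (rem_mem_cell h)).symm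

lemma prod_rmT {M : Type*} [CommMonoid M] {N : ℕ} {lam : Fin N → YoungDiagram} {p : Bx N}
    (h : p ∈ remS lam) (f : Fin N → ℕ × ℕ → M) :
    ∏ b, ∏ c ∈ (lam b).cells, f b c = f p.1 p.2 * ∏ b, ∏ c ∈ (rmT lam p b).cells, f b c := by
  rw [Finset.prod_sigma', Finset.prod_sigma']
  have := cellS_rmT h
  unfold cellS at this
  rw [this]
  exact (Finset.mul_prod_erase _ (fun x : Bx N => f x.1 x.2) (rem_mem_cell h)).symm

lemma totalCard_rmT {N : ℕ} {lam : Fin N → YoungDiagram} {p : Bx N} (h : p ∈ remS lam) :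
    totalCard N lam = totalCard N (rmT lam p) + 1 := by
  have := sum_rmT h (fun _ _ => 1)
  simp only [Finset.sum_const, smul_eq_mul, mul_one] at this
  unfold totalCard YoungDiagram.card
  omega

lemma addS_card {N : ℕ} (lam : Fin N → YoungDiagram) : (addS lam).card = (remS lam).card + N := by
  simp [addS, remS, addB_card, Finset.sum_add_distrib]

lemma content_10 (ε₁ ε₂ : ℂ) (c : ℕ × ℕ) : content ε₁ ε₂ (c.1 + 1, c.2) = content ε₁ ε₂ c + ε₁ := by
  simp [content]; ring
lemma content_01 (ε₁ ε₂ : ℂ) (c : ℕ × ℕ) : content ε₁ ε₂ (c.1, c.2 + 1) = content ε₁ ε₂ c + ε₂ := by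
  simp [content]; ring
lemma content_11 (ε₁ ε₂ : ℂ) (c : ℕ × ℕ) :
    content ε₁ ε₂ (c.1 + 1, c.2 + 1) = content ε₁ ε₂ c + (ε₁ + ε₂) := by
  simp [content]; ring
lemma content_00 (ε₁ ε₂ : ℂ) : content ε₁ ε₂ (0, 0) = 0 := by simp [content]

lemma charY {R : Type*} [CommRing R] {N : ℕ} (ε₁ ε₂ : ℂ) (a : Fin N → ℂ)
    (lam : Fin N → YoungDiagram) (E : ℂ → R) (hE : ∀ x y, E (x + y) = E x * E y) :
    ∑ b, E (a b) - (1 - E ε₁) * (1 - E ε₂) * ∑ b, ∑ c ∈ (lam b).cells, E (a b + content ε₁ ε₂ c) =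
    ∑ p ∈ addS lam, E (wt ε₁ ε₂ a p) - E ε₁ * E ε₂ * ∑ p ∈ remS lam, E (wt ε₁ ε₂ a p) := by
  unfold addS remS
  rw [Finset.sum_sigma, Finset.sum_sigma, Finset.mul_sum, Finset.mul_sum,
    ← Finset.sum_sub_distrib, ← Finset.sum_sub_distrib]
  refine Finset.sum_congr rfl fun b _ => ?_
  have := key_sum (lam b) (fun c => E (a b + content ε₁ ε₂ c))
  simp only [content_10, content_01, content_11, content_00, add_zero, ← add_assoc] at this
  simp only [hE _ ε₁, hE _ ε₂, ← Finset.sum_mul] at this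
  simp only [wt]
  linear_combination this

lemma eExp_add (x y : ℂ) : eExp (x + y) = eExp x * eExp y := by
  simp [eExp, AddMonoidAlgebra.single_mul_single]
lemma eExp_zero : eExp 0 = 1 := rfl

lemma tangentChar_eq (N : ℕ) (ε₁ ε₂ : ℂ) (a : Fin N → ℂ) (lam : Fin N → YoungDiagram) :
    tangentChar N ε₁ ε₂ a lam =
      (∑ b, eExp (a b)) * (∑ b, ∑ c ∈ (lam b).cells, eExp (-(a b + content ε₁ ε₂ c))) +
      eExp ε₁ * eExp ε₂ * (∑ b, ∑ c ∈ (lam b).cells, eExp (a b + content ε₁ ε₂ c)) *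
        (∑ b, eExp (-a b)) -
      (1 - eExp ε₁) * (1 - eExp ε₂) *
        (∑ b, ∑ c ∈ (lam b).cells, eExp (a b + content ε₁ ε₂ c)) *
        (∑ b, ∑ c ∈ (lam b).cells, eExp (-(a b + content ε₁ ε₂ c))) := by
  have h1 : ∀ b, ∑ c ∈ (lam b).cells, eExp (-(a b + content ε₁ ε₂ c)) =
      eExp (-a b) * chiStar ε₁ ε₂ (lam b) := by
    intro b; simp only [chiStar, Finset.mul_sum, ← eExp_add, neg_add]
  have h2 : ∀ b, ∑ c ∈ (lam b).cells, eExp (a b + content ε₁ ε₂ c) =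
      eExp (a b) * chi ε₁ ε₂ (lam b) := by
    intro b; simp only [chi, Finset.mul_sum, ← eExp_add]
  simp only [h1, h2]
  unfold tangentChar
  rw [Finset.sum_mul_sum, mul_assoc (eExp ε₁ * eExp ε₂), Finset.sum_mul_sum, mul_assoc (_ * _),
    Finset.sum_mul_sum]
  simp only [Finset.mul_sum, ← Finset.sum_add_distrib, ← Finset.sum_sub_distrib]
  refine Finset.sum_congr rfl fun b _ => Finset.sum_congr rfl fun c _ => ?_
  rw [sub_eq_add_neg (a b), eExp_add, eExp_add]
  ring

lemma tangent_diff {N : ℕ} (ε₁ ε₂ : ℂ) (a : Fin N → ℂ) (lam : Fin N → YoungDiagram) (p : Bx N)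
    (h : p ∈ remS lam) :
    tangentChar N ε₁ ε₂ a lam +
      (∑ q ∈ remS (rmT lam p), eExp (wt ε₁ ε₂ a q + ε₁ + ε₂ - wt ε₁ ε₂ a p) +
        ∑ q ∈ remS (rmT lam p), eExp (wt ε₁ ε₂ a p - wt ε₁ ε₂ a q)) =
    tangentChar N ε₁ ε₂ a (rmT lam p) +
      (eExp ε₁ + eExp ε₂ +
      (∑ q ∈ (addS (rmT lam p)).erase p, eExp (wt ε₁ ε₂ a q - wt ε₁ ε₂ a p) +
      ∑ q ∈ (addS (rmT lam p)).erase p, eExp (ε₁ + ε₂ + wt ε₁ ε₂ a p - wt ε₁ ε₂ a q))) := by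
  rw [tangentChar_eq, tangentChar_eq]
  have k1 := sum_rmT h (fun b c => eExp (a b + content ε₁ ε₂ c))
  have k2 := sum_rmT h (fun b c => eExp (-(a b + content ε₁ ε₂ c)))
  have c1 := charY ε₁ ε₂ a (rmT lam p) eExp eExp_add
  have c2 := charY ε₁ ε₂ a (rmT lam p) (fun w => eExp (-w)) (fun x y => by rw [neg_add, eExp_add])
  rw [← Finset.add_sum_erase _ _ (addS_rmT h)] at c1 c2
  rw [k1, k2]
  have w1 : eExp (a p.1 + content ε₁ ε₂ p.2) = eExp (wt ε₁ ε₂ a p) := rfl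
  have w2 : eExp (-(a p.1 + content ε₁ ε₂ p.2)) = eExp (-wt ε₁ ε₂ a p) := rfl
  rw [w1, w2]
  generalize (∑ b, ∑ c ∈ (rmT lam p b).cells, eExp (a b + content ε₁ ε₂ c)) = K at *
  generalize (∑ b, ∑ c ∈ (rmT lam p b).cells, eExp (-(a b + content ε₁ ε₂ c))) = K' at *
  simp only [sub_eq_add_neg, eExp_add, ← Finset.sum_mul, ← Finset.mul_sum]
  have x1 : eExp (wt ε₁ ε₂ a p) * eExp (-wt ε₁ ε₂ a p) = 1 := by
    rw [← eExp_add, add_neg_cancel, eExp_zero]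
  have x2 : eExp ε₁ * eExp (-ε₁) = 1 := by
    rw [← eExp_add, add_neg_cancel, eExp_zero]
  have x3 : eExp ε₂ * eExp (-ε₂) = 1 := by
    rw [← eExp_add, add_neg_cancel, eExp_zero]
  generalize eExp (wt ε₁ ε₂ a p) = X at *
  generalize eExp (-wt ε₁ ε₂ a p) = X' at *
  generalize eExp ε₁ = q1 at *
  generalize eExp ε₂ = q2 at *
  generalize eExp (-ε₁) = r1 at *
  generalize eExp (-ε₂) = r2 at *
  generalize (∑ b, eExp (a b)) = W at *
  generalize (∑ b, eExp (-a b)) = W' at *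
  generalize (∑ q ∈ remS (rmT lam p), eExp (wt ε₁ ε₂ a q)) = R at *
  generalize (∑ q ∈ remS (rmT lam p), eExp (-wt ε₁ ε₂ a q)) = R' at *
  generalize (∑ q ∈ (addS (rmT lam p)).erase p, eExp (wt ε₁ ε₂ a q)) = A at *
  generalize (∑ q ∈ (addS (rmT lam p)).erase p, eExp (-wt ε₁ ε₂ a q)) = A' at *
  have d : (1 - q1) * (1 - q2) = q1 * q2 * ((1 - r1) * (1 - r2)) := by
    linear_combination (q2 - q2 * r2) * x2 + (q1 - 1) * x3
  have y : q1 * q2 * (r1 * r2) = 1 := by linear_combination q2 * r2 * x2 + x3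
  linear_combination X' * c1 + q1 * q2 * X * c2 + (q1 + q2) * x1 - X * K' * d - X * R' * y

lemma msum_inj {S S' : Multiset ℂ}
    (h : (S.map fun w => AddMonoidAlgebra.single w (1 : ℤ)).sum =
      (S'.map fun w => AddMonoidAlgebra.single w (1 : ℤ)).sum) : S = S' := by
  have key : ∀ (S : Multiset ℂ) (w : ℂ),
      ((S.map fun w => AddMonoidAlgebra.single w (1 : ℤ)).sum).coeff w = (S.count w : ℤ) := by
    intro S w
    induction S using Multiset.induction_on with
    | empty => simp
    | cons x S ih =>
      rw [Multiset.map_cons, Multiset.sum_cons, AddMonoidAlgebra.coeff_add, Finsupp.add_apply, ih,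
        Multiset.count_cons, AddMonoidAlgebra.coeff_single, Finsupp.single_apply]
      by_cases hx : w = x
      · subst hx; simp; ring
      · simp [hx, Ne.symm hx]
  ext w
  have := key S w
  rw [h, key S' w] at this
  exact_mod_cast this.symm

lemma T_prod {N : ℕ} (ε₁ ε₂ : ℂ) (a : Fin N → ℂ) (T : (Fin N → YoungDiagram) → Multiset ℂ)
    (hT : ∀ lam : Fin N → YoungDiagram,
      ((T lam).map fun w => AddMonoidAlgebra.single w (1 : ℤ)).sum = tangentChar N ε₁ ε₂ a lam)
    (lam : Fin N → YoungDiagram) (p : Bx N) (h : p ∈ remS lam) :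
    (T lam).prod * ((∏ q ∈ remS (rmT lam p), (wt ε₁ ε₂ a q + ε₁ + ε₂ - wt ε₁ ε₂ a p)) *
        ∏ q ∈ remS (rmT lam p), (wt ε₁ ε₂ a p - wt ε₁ ε₂ a q)) =
    (T (rmT lam p)).prod * (ε₁ * ε₂ *
      ((∏ q ∈ (addS (rmT lam p)).erase p, (wt ε₁ ε₂ a q - wt ε₁ ε₂ a p)) *
      ∏ q ∈ (addS (rmT lam p)).erase p, (ε₁ + ε₂ + wt ε₁ ε₂ a p - wt ε₁ ε₂ a q))) := by
  have hd := tangent_diff ε₁ ε₂ a lam p h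
  rw [← hT, ← hT] at hd
  have hm : T lam + ((remS (rmT lam p)).val.map (fun q => wt ε₁ ε₂ a q + ε₁ + ε₂ - wt ε₁ ε₂ a p) +
      (remS (rmT lam p)).val.map (fun q => wt ε₁ ε₂ a p - wt ε₁ ε₂ a q)) =
      T (rmT lam p) + ({ε₁} + {ε₂} +
      (((addS (rmT lam p)).erase p).val.map (fun q => wt ε₁ ε₂ a q - wt ε₁ ε₂ a p) +
      ((addS (rmT lam p)).erase p).val.map (fun q => ε₁ + ε₂ + wt ε₁ ε₂ a p - wt ε₁ ε₂ a q))) := by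
    apply msum_inj
    simp only [Multiset.map_add, Multiset.map_map, Function.comp_def, Multiset.sum_add,
      Multiset.map_singleton, Multiset.sum_singleton]
    exact hd
  have := congrArg Multiset.prod hm
  simp only [Multiset.prod_add, Multiset.prod_singleton] at this
  exact this

end QQ

namespace QQ

/-- `f` is regular at `x₀` with value `v`. -/
def Val (x₀ : ℂ) (f : RatFunc ℂ) (v : ℂ) : Prop :=
  ∃ p q : Polynomial ℂ, q.eval x₀ ≠ 0 ∧
    f * algebraMap (Polynomial ℂ) (RatFunc ℂ) q = algebraMap (Polynomial ℂ) (RatFunc ℂ) p ∧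
    p.eval x₀ = v * q.eval x₀

lemma Val.congr {x₀ : ℂ} {f g : RatFunc ℂ} {v w : ℂ} (h : Val x₀ f v) (e : f = g) (e' : v = w) :
    Val x₀ g w := e ▸ e' ▸ h

lemma Val.C (x₀ c : ℂ) : Val x₀ (RatFunc.C c) c :=
  ⟨Polynomial.C c, 1, by simp, by simp, by simp⟩

lemma Val.X (x₀ : ℂ) : Val x₀ RatFunc.X x₀ :=
  ⟨Polynomial.X, 1, by simp, by simp, by simp⟩

lemma Val.mul {x₀ : ℂ} {f g : RatFunc ℂ} {v w : ℂ} (hf : Val x₀ f v) (hg : Val x₀ g w) :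
    Val x₀ (f * g) (v * w) := by
  obtain ⟨p, q, h1, h2, h3⟩ := hf
  obtain ⟨p', q', h1', h2', h3'⟩ := hg
  refine ⟨p * p', q * q', by simp [h1, h1'], ?_, ?_⟩
  · rw [map_mul, map_mul, ← h2, ← h2']; ring
  · rw [Polynomial.eval_mul, Polynomial.eval_mul, h3, h3']; ring

lemma Val.add {x₀ : ℂ} {f g : RatFunc ℂ} {v w : ℂ} (hf : Val x₀ f v) (hg : Val x₀ g w) :
    Val x₀ (f + g) (v + w) := by
  obtain ⟨p, q, h1, h2, h3⟩ := hf
  obtain ⟨p', q', h1', h2', h3'⟩ := hg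
  refine ⟨p * q' + p' * q, q * q', by simp [h1, h1'], ?_, ?_⟩
  · rw [map_mul, map_add, map_mul, map_mul, ← h2, ← h2']; ring
  · rw [Polynomial.eval_add, Polynomial.eval_mul, Polynomial.eval_mul, Polynomial.eval_mul,
      h3, h3']; ring

lemma Val.sub {x₀ : ℂ} {f g : RatFunc ℂ} {v w : ℂ} (hf : Val x₀ f v) (hg : Val x₀ g w) :
    Val x₀ (f - g) (v - w) :=
  (hf.add ((Val.C x₀ (-1)).mul hg)).congr (by simp [sub_eq_add_neg]) (by ring)

lemma Val.inv {x₀ : ℂ} {f : RatFunc ℂ} {v : ℂ} (hf : Val x₀ f v) (hv : v ≠ 0) :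
    Val x₀ f⁻¹ v⁻¹ := by
  obtain ⟨p, q, h1, h2, h3⟩ := hf
  have hp : p.eval x₀ ≠ 0 := by rw [h3]; exact mul_ne_zero hv h1
  have hp' : algebraMap (Polynomial ℂ) (RatFunc ℂ) p ≠ 0 := by
    intro h
    rw [map_eq_zero_iff _ (RatFunc.algebraMap_injective ℂ)] at h
    simp [h] at hp
  refine ⟨q, p, hp, ?_, ?_⟩
  · have hf : f ≠ 0 := by rintro rfl; rw [zero_mul] at h2; exact hp' h2.symm
    rw [← h2]; field_simp
  · rw [h3]; field_simp

lemma Val.div {x₀ : ℂ} {f g : RatFunc ℂ} {v w : ℂ} (hf : Val x₀ f v) (hg : Val x₀ g w)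
    (hw : w ≠ 0) : Val x₀ (f / g) (v / w) := by
  rw [div_eq_mul_inv, div_eq_mul_inv]; exact hf.mul (hg.inv hw)

lemma Val.prod {ι : Type*} {x₀ : ℂ} (s : Finset ι) (f : ι → RatFunc ℂ) (v : ι → ℂ)
    (h : ∀ i ∈ s, Val x₀ (f i) (v i)) : Val x₀ (∏ i ∈ s, f i) (∏ i ∈ s, v i) := by
  classical
  induction s using Finset.induction_on with
  | empty => simpa using Val.C x₀ 1
  | insert i s hi ih =>
    rw [Finset.prod_insert hi, Finset.prod_insert hi]
    exact (h i (by simp)).mul (ih fun j hj => h j (by simp [hj]))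

lemma Val.lin (x₀ s w : ℂ) : Val x₀ (RatFunc.X + RatFunc.C s - RatFunc.C w) (x₀ + s - w) :=
  ((Val.X x₀).add (Val.C x₀ s)).sub (Val.C x₀ w)

/-- Regularity at a point. -/
def Reg (x₀ : ℂ) (f : RatFunc ℂ) : Prop := ∃ v, Val x₀ f v

lemma Reg.sum {ι : Type*} {x₀ : ℂ} (s : Finset ι) (f : ι → RatFunc ℂ)
    (h : ∀ i ∈ s, Reg x₀ (f i)) : Reg x₀ (∑ i ∈ s, f i) := by
  classical
  induction s using Finset.induction_on with
  | empty => exact ⟨0, by simpa using Val.C x₀ 0⟩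
  | insert i s hi ih =>
    rw [Finset.sum_insert hi]
    obtain ⟨v, hv⟩ := h i (by simp)
    obtain ⟨w, hw⟩ := ih fun j hj => h j (by simp [hj])
    exact ⟨_, hv.add hw⟩

lemma Reg.prod {ι : Type*} {x₀ : ℂ} (s : Finset ι) (f : ι → RatFunc ℂ)
    (h : ∀ i ∈ s, Reg x₀ (f i)) : Reg x₀ (∏ i ∈ s, f i) := by
  classical
  choose! v hv using h
  exact ⟨_, Val.prod s f v hv⟩

lemma Reg.mul {x₀ : ℂ} {f g : RatFunc ℂ} (hf : Reg x₀ f) (hg : Reg x₀ g) : Reg x₀ (f * g) := by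
  obtain ⟨v, hv⟩ := hf
  obtain ⟨w, hw⟩ := hg
  exact ⟨_, hv.mul hw⟩

lemma Reg.add {x₀ : ℂ} {f g : RatFunc ℂ} (hf : Reg x₀ f) (hg : Reg x₀ g) : Reg x₀ (f + g) := by
  obtain ⟨v, hv⟩ := hf
  obtain ⟨w, hw⟩ := hg
  exact ⟨_, hv.add hw⟩

lemma lin_ne (s w : ℂ) : RatFunc.X + RatFunc.C s - RatFunc.C w ≠ 0 := by
  intro h
  have e : (RatFunc.X + RatFunc.C s - RatFunc.C w : RatFunc ℂ) =
    algebraMap (Polynomial ℂ) (RatFunc ℂ) (Polynomial.X + Polynomial.C (s - w)) := by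
    simp; ring
  rw [e, map_eq_zero_iff _ (RatFunc.algebraMap_injective ℂ)] at h
  exact Polynomial.X_add_C_ne_zero _ h

lemma Reg.of_zero {x₀ : ℂ} {f : RatFunc ℂ}
    (h : Val x₀ ((RatFunc.X + RatFunc.C 0 - RatFunc.C x₀) * f) 0) : Reg x₀ f := by
  obtain ⟨p, q, h1, h2, h3⟩ := h
  rw [zero_mul] at h3
  obtain ⟨p', rfl⟩ := Polynomial.dvd_iff_isRoot.2 h3
  have e : (RatFunc.X + RatFunc.C 0 - RatFunc.C x₀ : RatFunc ℂ) =
    algebraMap (Polynomial ℂ) (RatFunc ℂ) (Polynomial.X - Polynomial.C x₀) := by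
    simp
  refine ⟨p'.eval x₀ / q.eval x₀, p', q, h1, ?_, by field_simp⟩
  apply mul_left_cancel₀ (lin_ne 0 x₀)
  rw [← mul_assoc, h2, map_mul, e]

lemma poly_of_reg (f : RatFunc ℂ) (h : ∀ x₀, Reg x₀ f) :
    ∃ p, f = algebraMap (Polynomial ℂ) (RatFunc ℂ) p := by
  have hd : f.denom.degree = 0 := by
    by_contra hne
    obtain ⟨x, hx⟩ := IsAlgClosed.exists_root f.denom hne
    obtain ⟨v, p, q, h1, h2, h3⟩ := h x
    have hq : q ≠ 0 := by rintro rfl; simp at h1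
    have hq' : algebraMap (Polynomial ℂ) (RatFunc ℂ) q ≠ 0 := by
      rw [Ne, map_eq_zero_iff _ (RatFunc.algebraMap_injective ℂ)]; exact hq
    have hdd : f.denom ∣ q := (RatFunc.denom_dvd hq).2 ⟨p, by rw [← h2, mul_div_cancel_right₀ _ hq']⟩
    obtain ⟨r, hr⟩ := hdd
    apply h1
    rw [hr, Polynomial.eval_mul, hx.eq_zero, zero_mul]
  have h1 : f.denom = 1 := (RatFunc.monic_denom f).degree_le_zero_iff_eq_one.1 hd.le
  refine ⟨f.num, ?_⟩
  have := RatFunc.num_div_denom f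
  rw [h1] at this
  simpa using this.symm

lemma Yobs_eq (N : ℕ) (ε₁ ε₂ : ℂ) (a : Fin N → ℂ) (s : ℂ) (lam : Fin N → YoungDiagram) :
    Yobs N ε₁ ε₂ a s lam =
      (∏ p ∈ addS lam, (RatFunc.X + RatFunc.C s - RatFunc.C (wt ε₁ ε₂ a p))) /
      ∏ p ∈ remS lam, (RatFunc.X + RatFunc.C s - RatFunc.C (wt ε₁ ε₂ a p + (ε₁ + ε₂))) := by
  unfold addS remS Yobs
  rw [Finset.prod_sigma, Finset.prod_sigma, ← Finset.prod_div_distrib]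
  refine Finset.prod_congr rfl fun b _ => ?_
  have := key_prod (lam b) (fun c => (RatFunc.X + RatFunc.C s - RatFunc.C (a b + content ε₁ ε₂ c)))
  simp only [content_10, content_01, content_11, content_00, add_zero] at this
  have n1 : ∀ (S : Finset (ℕ × ℕ)) (g : ℕ × ℕ → ℂ),
      ∏ c ∈ S, (RatFunc.X + RatFunc.C s - RatFunc.C (g c)) ≠ 0 := fun S g =>
    Finset.prod_ne_zero_iff.2 fun c _ => lin_ne _ _
  simp only [wt]
  rw [Finset.prod_div_distrib, Finset.prod_mul_distrib, Finset.prod_mul_distrib,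
    ← mul_div_assoc, div_eq_div_iff (mul_ne_zero (n1 _ _) (n1 _ _)) (n1 _ _)]
  simp only [add_assoc] at this ⊢
  linear_combination this

/-- The factor by which `Y` changes when a box of content `w` is added. -/
def Kfac (ε₁ ε₂ s w : ℂ) : RatFunc ℂ :=
  (RatFunc.X + RatFunc.C s - RatFunc.C (w + ε₁)) *
            (RatFunc.X + RatFunc.C s - RatFunc.C (w + ε₂)) /
          ((RatFunc.X + RatFunc.C s - RatFunc.C w) *
            (RatFunc.X + RatFunc.C s - RatFunc.C (w + (ε₁ + ε₂))))

lemma Yobs_rm (N : ℕ) (ε₁ ε₂ : ℂ) (a : Fin N → ℂ) (s : ℂ) (lam : Fin N → YoungDiagram) (p : Bx N)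
    (h : p ∈ remS lam) :
    Yobs N ε₁ ε₂ a s lam = Kfac ε₁ ε₂ s (wt ε₁ ε₂ a p) * Yobs N ε₁ ε₂ a s (rmT lam p) := by
  unfold Yobs
  rw [Finset.prod_mul_distrib, Finset.prod_mul_distrib,
    prod_rmT h (fun b c => ((RatFunc.X + RatFunc.C s - RatFunc.C (a b + content ε₁ ε₂ c + ε₁)) *
            (RatFunc.X + RatFunc.C s - RatFunc.C (a b + content ε₁ ε₂ c + ε₂)) /
          ((RatFunc.X + RatFunc.C s - RatFunc.C (a b + content ε₁ ε₂ c)) *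
            (RatFunc.X + RatFunc.C s - RatFunc.C (a b + content ε₁ ε₂ c + (ε₁ + ε₂))))))]
  rw [mul_left_comm]
  rfl

lemma Val.Kfac {x₀ ε₁ ε₂ s w : ℂ} (h1 : x₀ + s - w ≠ 0) (h2 : x₀ + s - (w + (ε₁ + ε₂)) ≠ 0) :
    Val x₀ (Kfac ε₁ ε₂ s w) ((x₀ + s - (w + ε₁)) * (x₀ + s - (w + ε₂)) /
      ((x₀ + s - w) * (x₀ + s - (w + (ε₁ + ε₂))))) :=
  ((Val.lin _ _ _).mul (Val.lin _ _ _)).div ((Val.lin _ _ _).mul (Val.lin _ _ _))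
    (mul_ne_zero h1 h2)

lemma Val.P (N : ℕ) (m : Fin (2 * N) → ℂ) (x₀ s : ℂ) :
    Val x₀ (Pmat N m s) (∏ f, (x₀ + s - m f)) :=
  Val.prod _ _ _ fun _ _ => Val.lin _ _ _

lemma reg_Y (N : ℕ) (ε₁ ε₂ : ℂ) (a : Fin N → ℂ) (x₀ s : ℂ) (lam : Fin N → YoungDiagram)
    (h : ∀ p ∈ remS lam, x₀ + s - (wt ε₁ ε₂ a p + (ε₁ + ε₂)) ≠ 0) :
    Reg x₀ (Yobs N ε₁ ε₂ a s lam) := by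
  rw [Yobs_eq]
  exact ⟨_, (Val.prod _ _ _ fun _ _ => Val.lin _ _ _).div (Val.prod _ _ _ fun _ _ => Val.lin _ _ _)
    (Finset.prod_ne_zero_iff.2 h)⟩

lemma reg_PY (N : ℕ) (ε₁ ε₂ : ℂ) (a : Fin N → ℂ) (m : Fin (2 * N) → ℂ) (x₀ s : ℂ)
    (lam : Fin N → YoungDiagram)
    (h : ∀ p ∈ addS lam, x₀ + s - wt ε₁ ε₂ a p ≠ 0) :
    Reg x₀ (Pmat N m s / Yobs N ε₁ ε₂ a s lam) := by
  rw [Yobs_eq, div_div_eq_mul_div]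
  exact ⟨_, ((Val.P N m x₀ s).mul (Val.prod _ _ _ fun _ _ => Val.lin _ _ _)).div
    (Val.prod _ _ _ fun _ _ => Val.lin _ _ _) (Finset.prod_ne_zero_iff.2 h)⟩

end QQ

namespace QQ

lemma add_rem_ne {N : ℕ} {lam : Fin N → YoungDiagram} {p q : Bx N} (hp : p ∈ addS lam)
    (hq : q ∈ remS lam) : p ≠ q := by
  rintro rfl
  exact (mem_addB.1 (mem_addS.1 hp)).1 (mem_remB.1 (mem_remS.1 hq)).1

lemma add_rem_shift {N : ℕ} {lam : Fin N → YoungDiagram} {p q : Bx N} (hp : p ∈ addS lam)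
    (hq : q ∈ remS lam) : ¬ (q.1 = p.1 ∧ (q.2.1 : ℤ) + 1 = p.2.1 ∧ (q.2.2 : ℤ) + 1 = p.2.2) := by
  obtain ⟨b, i, j⟩ := p
  obtain ⟨b', i', j'⟩ := q
  rintro ⟨h1, h2, h3⟩
  simp only at h1 h2 h3
  subst h1
  obtain rfl : i = i' + 1 := by omega
  obtain rfl : j = j' + 1 := by omega
  have hp' := (mem_addB.1 (mem_addS.1 hp)).2.2
  have hq' := (mem_remB.1 (mem_remS.1 hq)).2.1
  simp at hp' hq'
  exact hq' hp'

lemma add_add_shift {N : ℕ} {lam : Fin N → YoungDiagram} {p q : Bx N} (hp : p ∈ addS lam)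
    (hq : q ∈ addS lam) : ¬ (p.1 = q.1 ∧ (p.2.1 : ℤ) + 1 = q.2.1 ∧ (p.2.2 : ℤ) + 1 = q.2.2) := by
  obtain ⟨b, i, j⟩ := p
  obtain ⟨b', i', j'⟩ := q
  rintro ⟨h1, h2, h3⟩
  simp only at h1 h2 h3
  subst h1
  obtain rfl : i' = i + 1 := by omega
  obtain rfl : j' = j + 1 := by omega
  have hp' := (mem_addB.1 (mem_addS.1 hp)).1
  have hq' := (mem_addB.1 (mem_addS.1 hq)).2.2
  simp at hp' hq'
  exact hp' ((lam b).up_left_mem (by simp) le_rfl hq')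

lemma mu_rel {N : ℕ} (hN : 1 ≤ N) (ε₁ ε₂ : ℂ) (a : Fin N → ℂ) (m : Fin (2 * N) → ℂ)
    (T : (Fin N → YoungDiagram) → Multiset ℂ)
    (hT : ∀ lam : Fin N → YoungDiagram,
      ((T lam).map fun w => AddMonoidAlgebra.single w (1 : ℤ)).sum = tangentChar N ε₁ ε₂ a lam)
    (lam : Fin N → YoungDiagram) (p : Bx N) (h : p ∈ remS lam) (h1 : ε₁ ≠ 0) (h2 : ε₂ ≠ 0)
    (hB1 : ∀ q ∈ remS (rmT lam p), wt ε₁ ε₂ a q + ε₁ + ε₂ - wt ε₁ ε₂ a p ≠ 0)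
    (hB2 : ∀ q ∈ remS (rmT lam p), wt ε₁ ε₂ a p - wt ε₁ ε₂ a q ≠ 0)
    (hA1 : ∀ q ∈ (addS (rmT lam p)).erase p, wt ε₁ ε₂ a q - wt ε₁ ε₂ a p ≠ 0)
    (hA2 : ∀ q ∈ (addS (rmT lam p)).erase p, ε₁ + ε₂ + wt ε₁ ε₂ a p - wt ε₁ ε₂ a q ≠ 0) :
    muHat N ε₁ ε₂ a m T lam *
      (ε₁ * ε₂ * (∏ q ∈ (addS (rmT lam p)).erase p, (ε₁ + ε₂ + wt ε₁ ε₂ a p - wt ε₁ ε₂ a q)) /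
        ∏ q ∈ remS (rmT lam p), (wt ε₁ ε₂ a p - wt ε₁ ε₂ a q)) +
    muHat N ε₁ ε₂ a m T (rmT lam p) * ((∏ f, (wt ε₁ ε₂ a p - m f)) *
      (∏ q ∈ remS (rmT lam p), (wt ε₁ ε₂ a p - (wt ε₁ ε₂ a q + (ε₁ + ε₂)))) /
        ∏ q ∈ (addS (rmT lam p)).erase p, (wt ε₁ ε₂ a p - wt ε₁ ε₂ a q)) = 0 := by
  have hTp := T_prod ε₁ ε₂ a T hT lam p h
  have hcard : ((addS (rmT lam p)).erase p).card + 1 = (remS (rmT lam p)).card + N := by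
    rw [Finset.card_erase_add_one (addS_rmT h), addS_card]
  have s1 : ∏ q ∈ remS (rmT lam p), (wt ε₁ ε₂ a p - (wt ε₁ ε₂ a q + (ε₁ + ε₂))) =
      (-1) ^ (remS (rmT lam p)).card *
        ∏ q ∈ remS (rmT lam p), (wt ε₁ ε₂ a q + ε₁ + ε₂ - wt ε₁ ε₂ a p) := by
    rw [← Finset.prod_const, ← Finset.prod_mul_distrib]
    exact Finset.prod_congr rfl fun q _ => by ring
  have s2 : ∏ q ∈ (addS (rmT lam p)).erase p, (wt ε₁ ε₂ a p - wt ε₁ ε₂ a q) =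
      (-1) ^ ((addS (rmT lam p)).erase p).card *
        ∏ q ∈ (addS (rmT lam p)).erase p, (wt ε₁ ε₂ a q - wt ε₁ ε₂ a p) := by
    rw [← Finset.prod_const, ← Finset.prod_mul_distrib]
    exact Finset.prod_congr rfl fun q _ => by ring
  have nB1 := Finset.prod_ne_zero_iff.2 hB1
  have nB2 := Finset.prod_ne_zero_iff.2 hB2
  have nA1 := Finset.prod_ne_zero_iff.2 hA1
  have nA2 := Finset.prod_ne_zero_iff.2 hA2
  rw [s1, s2]
  unfold muHat
  rw [totalCard_rmT h, prod_rmT h (fun b c => ∏ f, (a b + content ε₁ ε₂ c - m f))]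
  change _ * ((∏ f, (wt ε₁ ε₂ a p - m f)) * _) / _ * _ + _ = _
  generalize (∏ q ∈ remS (rmT lam p), (wt ε₁ ε₂ a q + ε₁ + ε₂ - wt ε₁ ε₂ a p)) = B1 at *
  generalize (∏ q ∈ remS (rmT lam p), (wt ε₁ ε₂ a p - wt ε₁ ε₂ a q)) = B2 at *
  generalize (∏ q ∈ (addS (rmT lam p)).erase p, (wt ε₁ ε₂ a q - wt ε₁ ε₂ a p)) = A1 at *
  generalize (∏ q ∈ (addS (rmT lam p)).erase p, (ε₁ + ε₂ + wt ε₁ ε₂ a p - wt ε₁ ε₂ a q)) = A2 at *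
  generalize (∏ f, (wt ε₁ ε₂ a p - m f)) = P at *
  generalize (∏ b, ∏ c ∈ (rmT lam p b).cells, ∏ f, (a b + content ε₁ ε₂ c - m f)) = M at *
  generalize (T lam).prod = t at *
  generalize (T (rmT lam p)).prod = t' at *
  generalize ((addS (rmT lam p)).erase p).card = nA at *
  generalize (remS (rmT lam p)).card = nR at *
  generalize totalCard N (rmT lam p) = n at *
  obtain ⟨N', hN'⟩ : ∃ N', N = N' + 1 := ⟨N - 1, by omega⟩
  obtain rfl : nA = nR + N' := by omega
  rw [mul_add, mul_one, pow_add, pow_add, show (-1 : ℂ) ^ N = (-1) ^ N' * (-1) by rw [hN', pow_succ]]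
  have q1 : ((-1 : ℂ) ^ N') * (-1) ^ N' = 1 := by rw [← mul_pow]; simp
  have n1 : ((-1 : ℂ) ^ N') ≠ 0 := by simp
  have n2 : ((-1 : ℂ) ^ nR) ≠ 0 := by simp
  generalize (-1 : ℂ) ^ N' = u at *
  generalize (-1 : ℂ) ^ nR = v at *
  generalize (-1 : ℂ) ^ (N * n) = y at *
  have ht : t = t' * (ε₁ * ε₂ * (A1 * A2)) / (B1 * B2) := by
    rw [eq_div_iff (mul_ne_zero nB1 nB2)]; exact hTp
  rw [ht]
  by_cases h0 : t' = 0
  · simp [h0]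
  · field_simp
    linear_combination (-y * P * M * B1) * q1

lemma gen_wt {N mm : ℕ} {ε₁ ε₂ : ℂ} {a : Fin N → ℂ} {ν : Fin mm → ℂ}
    (hgen : ∀ b c : Fin N, ∀ r s : Fin mm, ∀ i j : ℤ,
      a b - a c + ν r - ν s + (i : ℂ) * ε₁ + (j : ℂ) * ε₂ = 0 →
        b = c ∧ r = s ∧ i = 0 ∧ j = 0) (p q : Bx N) (r s : Fin mm) (i j : ℤ)
    (h : ν r + wt ε₁ ε₂ a p + i * ε₁ + j * ε₂ = ν s + wt ε₁ ε₂ a q) :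
    p.1 = q.1 ∧ r = s ∧ (p.2.1 : ℤ) + i = q.2.1 ∧ (p.2.2 : ℤ) + j = q.2.2 := by
  have := hgen p.1 q.1 r s (p.2.1 + i - q.2.1) (p.2.2 + j - q.2.2) (by
    push_cast
    simp only [wt, content] at h
    linear_combination h)
  refine ⟨this.1, this.2.1, by omega, by omega⟩

lemma gen_wt0 {N mm : ℕ} {ε₁ ε₂ : ℂ} {a : Fin N → ℂ} {ν : Fin mm → ℂ}
    (hgen : ∀ b c : Fin N, ∀ r s : Fin mm, ∀ i j : ℤ,
      a b - a c + ν r - ν s + (i : ℂ) * ε₁ + (j : ℂ) * ε₂ = 0 →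
        b = c ∧ r = s ∧ i = 0 ∧ j = 0) {p q : Bx N} {r s : Fin mm}
    (h : ν r + wt ε₁ ε₂ a p = ν s + wt ε₁ ε₂ a q) : p = q ∧ r = s := by
  obtain ⟨h1, h2, h3, h4⟩ := gen_wt hgen p q r s 0 0 (by simpa using h)
  obtain ⟨b, i, j⟩ := p
  obtain ⟨b', i', j'⟩ := q
  simp only [add_zero, Nat.cast_inj] at h1 h3 h4
  subst h1 h3 h4
  exact ⟨rfl, h2⟩

/-- One summand of the averaged qq-character. -/
def term (N mm : ℕ) (ε₁ ε₂ : ℂ) (a : Fin N → ℂ) (ν : Fin mm → ℂ) (m : Fin (2 * N) → ℂ)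
    (T : (Fin N → YoungDiagram) → Multiset ℂ) (J : Finset (Fin mm))
    (lam : Fin N → YoungDiagram) : RatFunc ℂ :=
  RatFunc.C (muHat N ε₁ ε₂ a m T lam) *
            RatFunc.C (∏ i ∈ Jᶜ, ∏ j ∈ J, Rfac ε₁ ε₂ (ν i - ν j)) *
            (∏ i ∈ Jᶜ, Yobs N ε₁ ε₂ a (ε₁ + ε₂ - ν i) lam) *
            (∏ j ∈ J, Pmat N m (-ν j) / Yobs N ε₁ ε₂ a (-ν j) lam)

lemma term_reg (N mm : ℕ) (ε₁ ε₂ : ℂ) (a : Fin N → ℂ) (ν : Fin mm → ℂ) (m : Fin (2 * N) → ℂ)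
    (T : (Fin N → YoungDiagram) → Multiset ℂ) (J : Finset (Fin mm))
    (lam : Fin N → YoungDiagram) (x₀ : ℂ)
    (h1 : ∀ i, i ∉ J → ∀ p ∈ remS lam, x₀ ≠ ν i + wt ε₁ ε₂ a p)
    (h2 : ∀ j ∈ J, ∀ p ∈ addS lam, x₀ ≠ ν j + wt ε₁ ε₂ a p) :
    Reg x₀ (term N mm ε₁ ε₂ a ν m T J lam) := by
  unfold term
  refine ((Reg.mul ⟨_, Val.C _ _⟩ ⟨_, Val.C _ _⟩).mul (Reg.prod _ _ fun i hi => ?_)).mul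
    (Reg.prod _ _ fun j hj => ?_)
  · apply reg_Y
    intro p hp h
    exact h1 i (by simpa using hi) p hp (by linear_combination h)
  · apply reg_PY
    intro p hp h
    exact h2 j hj p hp (by linear_combination h)

lemma val_Y1 (N : ℕ) (ε₁ ε₂ : ℂ) (a : Fin N → ℂ) (n : ℂ) (lam : Fin N → YoungDiagram) (p : Bx N)
    (h : p ∈ remS lam)
    (hB2 : ∀ q ∈ remS (rmT lam p), wt ε₁ ε₂ a p - wt ε₁ ε₂ a q ≠ 0) :
    Val (n + wt ε₁ ε₂ a p) ((RatFunc.X + RatFunc.C 0 - RatFunc.C (n + wt ε₁ ε₂ a p)) *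
      Yobs N ε₁ ε₂ a (ε₁ + ε₂ - n) lam)
      (ε₁ * ε₂ * (∏ q ∈ (addS (rmT lam p)).erase p, (ε₁ + ε₂ + wt ε₁ ε₂ a p - wt ε₁ ε₂ a q)) /
        ∏ q ∈ remS (rmT lam p), (wt ε₁ ε₂ a p - wt ε₁ ε₂ a q)) := by
  set x₀ := n + wt ε₁ ε₂ a p with hx
  set s := ε₁ + ε₂ - n with hs
  have key : (RatFunc.X + RatFunc.C 0 - RatFunc.C x₀) * Yobs N ε₁ ε₂ a s lam =
      ((RatFunc.X + RatFunc.C s - RatFunc.C (wt ε₁ ε₂ a p + ε₁)) *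
      (RatFunc.X + RatFunc.C s - RatFunc.C (wt ε₁ ε₂ a p + ε₂))) *
      (∏ q ∈ (addS (rmT lam p)).erase p, (RatFunc.X + RatFunc.C s - RatFunc.C (wt ε₁ ε₂ a q))) /
      ∏ q ∈ remS (rmT lam p), (RatFunc.X + RatFunc.C s - RatFunc.C (wt ε₁ ε₂ a q + (ε₁ + ε₂))) := by
    rw [Yobs_rm _ _ _ _ _ _ p h, Yobs_eq, Kfac, ← Finset.mul_prod_erase _ _ (addS_rmT h)]
    have e : RatFunc.X + RatFunc.C s - RatFunc.C (wt ε₁ ε₂ a p + (ε₁ + ε₂)) =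
        RatFunc.X + RatFunc.C 0 - RatFunc.C x₀ := by
      simp only [hx, hs, map_add, map_sub, map_zero]; ring
    rw [e]
    have n1 := lin_ne s (wt ε₁ ε₂ a p)
    have n2 := lin_ne 0 x₀
    generalize (RatFunc.X + RatFunc.C 0 - RatFunc.C x₀ : RatFunc ℂ) = L at *
    generalize (RatFunc.X + RatFunc.C s - RatFunc.C (wt ε₁ ε₂ a p) : RatFunc ℂ) = L' at *
    field_simp
  refine ((((Val.lin _ _ _).mul (Val.lin _ _ _)).mul (Val.prod _ _ _ fun _ _ => Val.lin _ _ _)).div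
    (Val.prod _ _ _ fun _ _ => Val.lin _ _ _) ?_).congr key.symm ?_
  · refine Finset.prod_ne_zero_iff.2 fun q hq hh => hB2 q hq ?_
    rw [hx, hs] at hh
    linear_combination hh
  · congr 1
    · congr 1
      · rw [hx, hs]; ring
      · exact Finset.prod_congr rfl fun q _ => by rw [hx, hs]; ring
    · exact Finset.prod_congr rfl fun q _ => by rw [hx, hs]; ring

lemma val_Y2 (N : ℕ) (ε₁ ε₂ : ℂ) (a : Fin N → ℂ) (m : Fin (2 * N) → ℂ) (n : ℂ)
    (lam : Fin N → YoungDiagram) (p : Bx N) (h : p ∈ addS lam)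
    (hA1 : ∀ q ∈ (addS lam).erase p, wt ε₁ ε₂ a q - wt ε₁ ε₂ a p ≠ 0) :
    Val (n + wt ε₁ ε₂ a p) ((RatFunc.X + RatFunc.C 0 - RatFunc.C (n + wt ε₁ ε₂ a p)) *
      (Pmat N m (-n) / Yobs N ε₁ ε₂ a (-n) lam))
      ((∏ f, (wt ε₁ ε₂ a p - m f)) *
      (∏ q ∈ remS lam, (wt ε₁ ε₂ a p - (wt ε₁ ε₂ a q + (ε₁ + ε₂)))) /
        ∏ q ∈ (addS lam).erase p, (wt ε₁ ε₂ a p - wt ε₁ ε₂ a q)) := by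
  set x₀ := n + wt ε₁ ε₂ a p with hx
  have key : (RatFunc.X + RatFunc.C 0 - RatFunc.C x₀) *
      (Pmat N m (-n) / Yobs N ε₁ ε₂ a (-n) lam) =
      Pmat N m (-n) * (∏ q ∈ remS lam,
        (RatFunc.X + RatFunc.C (-n) - RatFunc.C (wt ε₁ ε₂ a q + (ε₁ + ε₂)))) /
      ∏ q ∈ (addS lam).erase p, (RatFunc.X + RatFunc.C (-n) - RatFunc.C (wt ε₁ ε₂ a q)) := by
    rw [Yobs_eq, ← Finset.mul_prod_erase _ _ h, div_div_eq_mul_div]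
    have e : RatFunc.X + RatFunc.C (-n) - RatFunc.C (wt ε₁ ε₂ a p) =
        RatFunc.X + RatFunc.C 0 - RatFunc.C x₀ := by
      simp only [hx, map_add, map_neg, map_zero]; ring
    rw [e]
    have n2 := lin_ne 0 x₀
    generalize (RatFunc.X + RatFunc.C 0 - RatFunc.C x₀ : RatFunc ℂ) = L at *
    field_simp
  refine (((Val.P N m x₀ (-n)).mul (Val.prod _ _ _ fun _ _ => Val.lin _ _ _)).div
    (Val.prod _ _ _ fun _ _ => Val.lin _ _ _) ?_).congr key.symm ?_
  · refine Finset.prod_ne_zero_iff.2 fun q hq hh => hA1 q hq ?_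
    rw [hx] at hh
    linear_combination -hh
  · congr 1
    · congr 1
      · exact Finset.prod_congr rfl fun q _ => by rw [hx]; ring
      · exact Finset.prod_congr rfl fun q _ => by rw [hx]; ring
    · exact Finset.prod_congr rfl fun q _ => by rw [hx]; ring

end QQ

namespace QQ

lemma pair_reg {N mm : ℕ} (hN : 1 ≤ N) (ε₁ ε₂ : ℂ) (a : Fin N → ℂ) (ν : Fin mm → ℂ)
    (hgen : ∀ b c : Fin N, ∀ r s : Fin mm, ∀ i j : ℤ,
      a b - a c + ν r - ν s + (i : ℂ) * ε₁ + (j : ℂ) * ε₂ = 0 →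
        b = c ∧ r = s ∧ i = 0 ∧ j = 0)
    (m : Fin (2 * N) → ℂ)
    (T : (Fin N → YoungDiagram) → Multiset ℂ)
    (hT : ∀ lam : Fin N → YoungDiagram,
      ((T lam).map fun w => AddMonoidAlgebra.single w (1 : ℤ)).sum = tangentChar N ε₁ ε₂ a lam)
    (J : Finset (Fin mm)) (r : Fin mm) (hr : r ∉ J) (lam : Fin N → YoungDiagram) (p : Bx N)
    (h : p ∈ remS lam) :
    Reg (ν r + wt ε₁ ε₂ a p) (term N mm ε₁ ε₂ a ν m T J lam +
      term N mm ε₁ ε₂ a ν m T (insert r J) (rmT lam p)) := by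
  have hpa := addS_rmT h
  have h1 : ε₁ ≠ 0 := by
    intro h0
    have := (hgen p.1 p.1 r r 1 0 (by simp [h0])).2.2.1
    simp at this
  have h2 : ε₂ ≠ 0 := by
    intro h0
    have := (hgen p.1 p.1 r r 0 1 (by simp [h0])).2.2.2
    simp at this
  have hB1 : ∀ q ∈ remS (rmT lam p), wt ε₁ ε₂ a q + ε₁ + ε₂ - wt ε₁ ε₂ a p ≠ 0 := by
    intro q hq h0
    have := gen_wt hgen q p r r 1 1 (by push_cast; linear_combination h0)
    exact add_rem_shift hpa hq ⟨this.1, this.2.2⟩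
  have hB2 : ∀ q ∈ remS (rmT lam p), wt ε₁ ε₂ a p - wt ε₁ ε₂ a q ≠ 0 := by
    intro q hq h0
    exact add_rem_ne hpa hq (gen_wt0 hgen (r := r) (s := r) (by linear_combination h0)).1
  have hA1 : ∀ q ∈ (addS (rmT lam p)).erase p, wt ε₁ ε₂ a q - wt ε₁ ε₂ a p ≠ 0 := by
    intro q hq h0
    exact (Finset.mem_erase.1 hq).1
      (gen_wt0 hgen (r := r) (s := r) (by linear_combination h0)).1
  have hA2 : ∀ q ∈ (addS (rmT lam p)).erase p,
      ε₁ + ε₂ + wt ε₁ ε₂ a p - wt ε₁ ε₂ a q ≠ 0 := by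
    intro q hq h0
    have := gen_wt hgen p q r r 1 1 (by push_cast; linear_combination h0)
    exact add_add_shift hpa (Finset.mem_erase.1 hq).2 ⟨this.1, this.2.2⟩
  have hmu := mu_rel hN ε₁ ε₂ a m T hT lam p h h1 h2 hB1 hB2 hA1 hA2
  have V1 := val_Y1 N ε₁ ε₂ a (ν r) lam p h hB2
  have V2 := val_Y2 N ε₁ ε₂ a m (ν r) (rmT lam p) p hpa hA1
  have hν : ∀ s : Fin mm, s ≠ r → ∀ i j : ℤ, ν r - ν s + i * ε₁ + j * ε₂ ≠ 0 := by
    intro s hs i j h0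
    exact hs (hgen p.1 p.1 r s i j (by linear_combination h0)).2.1.symm
  have hI : Jᶜ = insert r (insert r J)ᶜ := by
    ext i; by_cases hi : i = r
    · subst hi; simp [hr]
    · simp [hi]
  have hrI : r ∉ (insert r J)ᶜ := by simp
  -- regular factors
  have vi : ∀ i ∈ (insert r J)ᶜ, Reg (ν r + wt ε₁ ε₂ a p)
      (Yobs N ε₁ ε₂ a (ε₁ + ε₂ - ν i) (rmT lam p)) := by
    intro i hi
    apply reg_Y
    intro q hq h0
    have := (gen_wt0 hgen (p := p) (q := q) (r := r) (s := i) (by linear_combination h0)).2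
    subst this
    exact hrI hi
  have vj : ∀ j ∈ J, Reg (ν r + wt ε₁ ε₂ a p)
      (Pmat N m (-ν j) / Yobs N ε₁ ε₂ a (-ν j) (rmT lam p)) := by
    intro j hj
    apply reg_PY
    intro q hq h0
    have := (gen_wt0 hgen (p := p) (q := q) (r := r) (s := j) (by linear_combination h0)).2
    subst this
    exact hr hj
  choose! v hv using vi
  choose! w hw using vj
  have hv' : ∀ i ∈ (insert r J)ᶜ, Val (ν r + wt ε₁ ε₂ a p)
      (Yobs N ε₁ ε₂ a (ε₁ + ε₂ - ν i) lam) (Rfac ε₁ ε₂ (ν i - ν r) * v i) := by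
    intro i hi
    have hir : i ≠ r := by rintro rfl; exact hrI hi
    have n1 := hν i hir 0 0
    have n2 := hν i hir 1 1
    push_cast at n1 n2
    rw [Yobs_rm _ _ _ _ _ _ p h]
    refine ((Val.Kfac ?_ ?_).mul (hv i hi)).congr rfl ?_
    · intro h0; exact n2 (by linear_combination h0)
    · intro h0; exact n1 (by linear_combination h0)
    · congr 1
      unfold Rfac
      congr 1 <;> ring
  have hR : ∀ j ∈ J, Rfac ε₁ ε₂ (ν r - ν j) ≠ 0 := by
    intro j hj
    have hjr : j ≠ r := by rintro rfl; exact hr hj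
    have n1 := hν j hjr 0 0
    have n2 := hν j hjr (-1) (-1)
    have n3 := hν j hjr (-1) 0
    have n4 := hν j hjr 0 (-1)
    push_cast at n1 n2 n3 n4
    unfold Rfac
    refine div_ne_zero (mul_ne_zero ?_ ?_) (mul_ne_zero ?_ ?_)
    · intro h0; exact n3 (by linear_combination h0)
    · intro h0; exact n4 (by linear_combination h0)
    · intro h0; exact n1 (by linear_combination h0)
    · intro h0; exact n2 (by linear_combination h0)
  have hw' : ∀ j ∈ J, Val (ν r + wt ε₁ ε₂ a p)
      (Pmat N m (-ν j) / Yobs N ε₁ ε₂ a (-ν j) lam) (w j / Rfac ε₁ ε₂ (ν r - ν j)) := by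
    intro j hj
    have hjr : j ≠ r := by rintro rfl; exact hr hj
    have n1 := hν j hjr 0 0
    have n2 := hν j hjr (-1) (-1)
    push_cast at n1 n2
    rw [Yobs_rm _ _ _ _ _ _ p h, mul_comm, ← div_div]
    refine (hw j hj).div ((Val.Kfac ?_ ?_).congr rfl ?_) (hR j hj)
    · intro h0; exact n1 (by linear_combination h0)
    · intro h0; exact n2 (by linear_combination h0)
    · unfold Rfac
      congr 1 <;> ring
  have E1 : Val (ν r + wt ε₁ ε₂ a p)
      ((RatFunc.X + RatFunc.C 0 - RatFunc.C (ν r + wt ε₁ ε₂ a p)) *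
        term N mm ε₁ ε₂ a ν m T J lam) _ :=
    (((((Val.C _ (muHat N ε₁ ε₂ a m T lam)).mul
      (Val.C _ (∏ i ∈ Jᶜ, ∏ j ∈ J, Rfac ε₁ ε₂ (ν i - ν j)))).mul
      V1).mul (Val.prod _ _ _ hv')).mul (Val.prod _ _ _ hw')).congr (by
        unfold term
        rw [hI, Finset.prod_insert hrI, Finset.prod_insert hrI]; ring) rfl
  have E2 : Val (ν r + wt ε₁ ε₂ a p)
      ((RatFunc.X + RatFunc.C 0 - RatFunc.C (ν r + wt ε₁ ε₂ a p)) *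
        term N mm ε₁ ε₂ a ν m T (insert r J) (rmT lam p)) _ :=
    (((((Val.C _ (muHat N ε₁ ε₂ a m T (rmT lam p))).mul
      (Val.C _ (∏ i ∈ (insert r J)ᶜ, ∏ j ∈ insert r J, Rfac ε₁ ε₂ (ν i - ν j)))).mul
      V2).mul (Val.prod _ _ _ hv)).mul (Val.prod _ _ _ hw)).congr (by
        unfold term
        rw [Finset.prod_insert hr]; ring) rfl
  apply Reg.of_zero
  rw [mul_add]
  refine (E1.add E2).congr rfl ?_
  rw [hI, Finset.prod_insert hrI]
  simp only [Finset.prod_insert hr]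
  rw [Finset.prod_mul_distrib, Finset.prod_mul_distrib, Finset.prod_div_distrib]
  have nR : ∏ j ∈ J, Rfac ε₁ ε₂ (ν r - ν j) ≠ 0 := Finset.prod_ne_zero_iff.2 hR
  generalize (∏ j ∈ J, Rfac ε₁ ε₂ (ν r - ν j)) = RJ at *
  generalize (∏ i ∈ (insert r J)ᶜ, Rfac ε₁ ε₂ (ν i - ν r)) = RI at *
  generalize (∏ i ∈ (insert r J)ᶜ, ∏ j ∈ J, Rfac ε₁ ε₂ (ν i - ν j)) = RR at *
  have hc : ∀ x : ℂ, RJ * (x / RJ) = x := fun x => by field_simp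
  linear_combination (RR * RI * (∏ i ∈ (insert r J)ᶜ, v i) * (∏ j ∈ J, w j)) * hmu +
    muHat N ε₁ ε₂ a m T lam * RR * (ε₁ * ε₂ *
      (∏ q ∈ (addS (rmT lam p)).erase p, (ε₁ + ε₂ + wt ε₁ ε₂ a p - wt ε₁ ε₂ a q)) /
        ∏ q ∈ remS (rmT lam p), (wt ε₁ ε₂ a p - wt ε₁ ε₂ a q)) * RI *
        (∏ i ∈ (insert r J)ᶜ, v i) * hc (∏ j ∈ J, w j)

lemma finite_tot (N k j : ℕ) :
    {lam : Fin N → YoungDiagram | totalCard N lam + j = k}.Finite := by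
  refine (Set.Finite.pi' (fun _ : Fin N => finite_card k)).subset ?_
  intro lam hlam b
  simp only [Set.mem_ofPred_eq] at hlam ⊢
  have : (lam b).card ≤ totalCard N lam :=
    Finset.single_le_sum (f := fun b => (lam b).card) (fun _ _ => Nat.zero_le _) (Finset.mem_univ b)
  omega

lemma total_reg {N mm : ℕ} (hN : 1 ≤ N) (ε₁ ε₂ : ℂ) (a : Fin N → ℂ) (ν : Fin mm → ℂ)
    (hgen : ∀ b c : Fin N, ∀ r s : Fin mm, ∀ i j : ℤ,
      a b - a c + ν r - ν s + (i : ℂ) * ε₁ + (j : ℂ) * ε₂ = 0 →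
        b = c ∧ r = s ∧ i = 0 ∧ j = 0)
    (m : Fin (2 * N) → ℂ)
    (T : (Fin N → YoungDiagram) → Multiset ℂ)
    (hT : ∀ lam : Fin N → YoungDiagram,
      ((T lam).map fun w => AddMonoidAlgebra.single w (1 : ℤ)).sum = tangentChar N ε₁ ε₂ a lam)
    (k : ℕ) (Ω : Finset ((_ : Finset (Fin mm)) × (Fin N → YoungDiagram)))
    (hΩ : ∀ x, x ∈ Ω ↔ totalCard N x.2 + x.1.card = k) (x₀ : ℂ) :
    Reg x₀ (∑ x ∈ Ω, term N mm ε₁ ε₂ a ν m T x.1 x.2) := by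
  classical
  by_cases hx : ∃ (r : Fin mm) (p : Bx N), x₀ = ν r + wt ε₁ ε₂ a p
  · obtain ⟨r, p, rfl⟩ := hx
    rw [← Finset.sum_filter_add_sum_filter_not Ω (fun x => r ∉ x.1 ∧ p ∈ remS x.2),
      ← Finset.sum_filter_add_sum_filter_not
        (Ω.filter fun x => ¬ (r ∉ x.1 ∧ p ∈ remS x.2)) (fun x => r ∈ x.1 ∧ p ∈ addS x.2),
      ← add_assoc]
    apply Reg.add
    · have hbij : ∑ x ∈ (Ω.filter fun x => ¬ (r ∉ x.1 ∧ p ∈ remS x.2)).filter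
            (fun x => r ∈ x.1 ∧ p ∈ addS x.2), term N mm ε₁ ε₂ a ν m T x.1 x.2 =
          ∑ x ∈ Ω.filter (fun x => r ∉ x.1 ∧ p ∈ remS x.2),
            term N mm ε₁ ε₂ a ν m T (insert r x.1) (rmT x.2 p) := by
        symm
        refine Finset.sum_nbij' (fun x => ⟨insert r x.1, rmT x.2 p⟩)
          (fun x => ⟨x.1.erase r, adT x.2 p⟩) ?_ ?_ ?_ ?_ ?_
        · rintro ⟨J, lam⟩ hm
          simp only [Finset.mem_filter, hΩ] at hm ⊢
          obtain ⟨h1, h2, h3⟩ := hm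
          have := totalCard_rmT h3
          refine ⟨⟨?_, ?_⟩, ?_, addS_rmT h3⟩
          · rw [Finset.card_insert_of_notMem h2]; omega
          · simp
          · simp
        · rintro ⟨J, lam⟩ hm
          simp only [Finset.mem_filter, hΩ] at hm ⊢
          obtain ⟨⟨h1, _⟩, h2, h3⟩ := hm
          have := totalCard_rmT (remS_adT h3)
          rw [rmT_adT h3] at this
          have := Finset.card_erase_add_one h2
          refine ⟨by omega, by simp, remS_adT h3⟩
        · rintro ⟨J, lam⟩ hm
          simp only [Finset.mem_filter] at hm
          simp only [Finset.erase_insert hm.2.1, adT_rmT hm.2.2]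
        · rintro ⟨J, lam⟩ hm
          simp only [Finset.mem_filter] at hm
          simp only [Finset.insert_erase hm.2.1, rmT_adT hm.2.2]
        · intros; rfl
      rw [hbij, ← Finset.sum_add_distrib]
      refine Reg.sum _ _ fun x hx => ?_
      simp only [Finset.mem_filter] at hx
      exact pair_reg hN ε₁ ε₂ a ν hgen m T hT x.1 r hx.2.1 x.2 p hx.2.2
    · refine Reg.sum _ _ fun x hx => ?_
      simp only [Finset.mem_filter] at hx
      obtain ⟨⟨_, h1⟩, h2⟩ := hx
      apply term_reg
      · intro i hi q hq h0
        obtain ⟨e1, e2⟩ := gen_wt0 hgen h0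
        subst e1 e2
        exact h1 ⟨hi, hq⟩
      · intro i hi q hq h0
        obtain ⟨e1, e2⟩ := gen_wt0 hgen h0
        subst e1 e2
        exact h2 ⟨hi, hq⟩
  · refine Reg.sum _ _ fun x _ => term_reg _ _ _ _ _ _ _ _ _ _ _ ?_ ?_
    · intro i _ p _ h0; exact hx ⟨i, p, h0⟩
    · intro i _ p _ h0; exact hx ⟨i, p, h0⟩

end QQ

/-- Regularity of the averaged higher qq-character `𝒳(x; ν)`: coefficientwise in the
instanton counting parameter `𝔮`, the average of
`𝒳(x;ν) = Σ_{I⊔J={1,…,m}} 𝔮^{|J|} ∏_{i∈I,j∈J} R(ν_i−ν_j) ∏_{i∈I} Y(x−ν_i+ε) ∏_{j∈J} P(x−ν_j)/Y(x−ν_j)`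
against the instanton pseudo-measure has no poles in `x`. -/
theorem averaged_higher_qq_character_regular (N mm : ℕ) (hN : 1 ≤ N) (hm : 1 ≤ mm)
    (ε₁ ε₂ : ℂ) (a : Fin N → ℂ) (ν : Fin mm → ℂ)
    (hgen : ∀ b c : Fin N, ∀ r s : Fin mm, ∀ i j : ℤ,
      a b - a c + ν r - ν s + (i : ℂ) * ε₁ + (j : ℂ) * ε₂ = 0 →
        b = c ∧ r = s ∧ i = 0 ∧ j = 0)
    (m : Fin (2 * N) → ℂ)
    (T : (Fin N → YoungDiagram) → Multiset ℂ)
    (hT : ∀ lam : Fin N → YoungDiagram,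
      ((T lam).map fun w => AddMonoidAlgebra.single w (1 : ℤ)).sum = tangentChar N ε₁ ε₂ a lam)
    (k : ℕ) :
    ∃ p : Polynomial ℂ,
      (∑ J : Finset (Fin mm),
        ∑ᶠ lam ∈ {lam : Fin N → YoungDiagram | totalCard N lam + J.card = k},
          RatFunc.C (muHat N ε₁ ε₂ a m T lam) *
            RatFunc.C (∏ i ∈ Jᶜ, ∏ j ∈ J, Rfac ε₁ ε₂ (ν i - ν j)) *
            (∏ i ∈ Jᶜ, Yobs N ε₁ ε₂ a (ε₁ + ε₂ - ν i) lam) *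
            (∏ j ∈ J, Pmat N m (-ν j) / Yobs N ε₁ ε₂ a (-ν j) lam)) =
      algebraMap (Polynomial ℂ) (RatFunc ℂ) p := by
  classical
  apply QQ.poly_of_reg
  intro x₀
  have hfin : ∀ J : Finset (Fin mm),
      {lam : Fin N → YoungDiagram | totalCard N lam + J.card = k}.Finite :=
    fun J => QQ.finite_tot N k J.card
  have := QQ.total_reg hN ε₁ ε₂ a ν hgen m T hT k
    (Finset.univ.sigma fun J => (hfin J).toFinset) (by intro x; simp) x₀
  rw [Finset.sum_sigma] at this
  convert this using 2 with J
  rw [finsum_mem_eq_finite_toFinset_sum _ (hfin J)]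
  rfl
end
end

section
/- Let N ≥ 1 and let q: ℤ/N → ℂ satisfy ∏_{ω∈ℤ/N} q_ω ≠ 1. Define U_ω = 1 + q_{ω+1} + q_{ω+1}q_{ω+2} + … + q_{ω+1}⋯q_{ω+N−1}. If U′: ℤ/N → ℂ satisfies the cyclic linear system (1 + q_ω)·U′_ω − U′_{ω−1} − q_{ω+1}·U′_{ω+1} = 0 for all ω ∈ ℤ/N, then there exists a constant c ∈ ℂ such that U′_ω = c·U_ω for all ω; that is, (U_ω)_{ω∈ℤ/N} is, up to an overall scalar factor, the unique solution of this system. -/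
open scoped BigOperators

/-- `U_ω = 1 + q_{ω+1} + q_{ω+1}q_{ω+2} + … + q_{ω+1}⋯q_{ω+N−1}`, indices mod `N`. -/
noncomputable def Ufam (N : ℕ) (q : ZMod N → ℂ) (ω : ZMod N) : ℂ :=
  ∑ l ∈ Finset.range N, ∏ m ∈ Finset.range l, q (ω + ((m + 1 : ℕ) : ZMod N))

/-- If `∏_ω q_ω ≠ 1`, then any solution `U′` of the cyclic linear system
`(1 + q_ω)·U′_ω − U′_{ω−1} − q_{ω+1}·U′_{ω+1} = 0` is a scalar multiple of `U`. -/
theorem system_solution_unique (N : ℕ) [NeZero N] (q : ZMod N → ℂ)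
    (hq : (∏ σ : ZMod N, q σ) ≠ 1)
    (U' : ZMod N → ℂ)
    (hU' : ∀ ω : ZMod N,
      (1 + q ω) * U' ω - U' (ω - 1) - q (ω + 1) * U' (ω + 1) = 0) :
    ∃ c : ℂ, ∀ ω : ZMod N, U' ω = c * Ufam N q ω := by
  have hD : ∀ n : ℕ, U' (n : ZMod N) - q ((n : ZMod N) + 1) * U' ((n : ZMod N) + 1)
      = U' 0 - q (0 + 1) * U' (0 + 1) := by
    intro n
    induction n with
    | zero => simp
    | succ k ih =>
      rw [← ih]
      have h := hU' ((k + 1 : ℕ) : ZMod N)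
      have e : ((k + 1 : ℕ) : ZMod N) - 1 = (k : ZMod N) := by push_cast; ring
      have e2 : ((k + 1 : ℕ) : ZMod N) = (k : ZMod N) + 1 := by push_cast; ring
      rw [e] at h
      rw [e2] at h ⊢
      linear_combination h
  obtain ⟨d, hd⟩ : ∃ d : ℂ, ∀ ω : ZMod N, U' ω - q (ω + 1) * U' (ω + 1) = d := by
    refine ⟨U' 0 - q (0 + 1) * U' (0 + 1), fun ω => ?_⟩
    have h := hD ω.val
    rw [ZMod.natCast_zmod_val] at h
    exact h
  have hP : ∀ ω : ZMod N, ∏ m ∈ Finset.range N, q (ω + ((m + 1 : ℕ) : ZMod N))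
      = ∏ σ : ZMod N, q σ := by
    intro ω
    refine Finset.prod_bij' (fun m _ => ω + ((m + 1 : ℕ) : ZMod N))
      (fun σ _ => (σ - ω - 1).val) ?_ ?_ ?_ ?_ ?_
    · intros; simp
    · intro σ _
      simpa using ZMod.val_lt (σ - ω - 1)
    · intro m hm
      have e : ω + ((m + 1 : ℕ) : ZMod N) - ω - 1 = (m : ZMod N) := by push_cast; ring
      simp only [e]
      exact ZMod.val_cast_of_lt (Finset.mem_range.mp hm)
    · intro σ _
      push_cast
      rw [ZMod.natCast_zmod_val]
      ring
    · intros; rfl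
  have hI : ∀ (ω : ZMod N) (n : ℕ), U' ω
      = d * (∑ l ∈ Finset.range n, ∏ m ∈ Finset.range l, q (ω + ((m + 1 : ℕ) : ZMod N)))
        + (∏ m ∈ Finset.range n, q (ω + ((m + 1 : ℕ) : ZMod N))) * U' (ω + (n : ZMod N)) := by
    intro ω n
    induction n with
    | zero => simp
    | succ k ih =>
      rw [Finset.sum_range_succ, Finset.prod_range_succ]
      have h := hd (ω + (k : ZMod N))
      have e : ω + ((k + 1 : ℕ) : ZMod N) = ω + (k : ZMod N) + 1 := by push_cast; ring
      rw [e]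
      linear_combination ih
        + (∏ m ∈ Finset.range k, q (ω + ((m + 1 : ℕ) : ZMod N))) * h
  refine ⟨d / (1 - ∏ σ : ZMod N, q σ), fun ω => ?_⟩
  have hne : (1 - ∏ σ : ZMod N, q σ) ≠ 0 := sub_ne_zero.mpr (Ne.symm hq)
  have h := hI ω N
  rw [hP, ZMod.natCast_self, add_zero] at h
  change U' ω = d * Ufam N q ω + _ at h
  rw [div_mul_eq_mul_div, eq_div_iff hne]
  linear_combination h
end
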